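/- arXiv:1604.02486 — 5 statements merged into one kernel-verified Lean document; each statement's English description precedes it below -/
import Mathlib

section
/- Let x be a feasible solution of the subtour elimination LP for s–t path TSP such that no edge is contained in more than two narrow cuts. Then the vector (3/2)·x is a convex combination of {s,t}-tours. -/
/-!
The edge `st` lies in every `s`–`t` cut, so the hypothesis applied to this single edge says that
there are at most two narrow cuts. Since `δ(s)` and `δ(t)` have value `1`, they are narrow, and
hence they are the only narrow cuts (`narrow_eq`). This makes the Christofides–Wolsey argument
work with ratio `3/2`.

Fix a nonnegative cost function `c` and let `C = ∑ c x`.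

* `x` satisfies the partition inequalities (`partition_ineq`), so for every nonnegative cost
  there is a connected spanning edge set whose cost is at most that of `x` (`exists_tree`,
  Kruskal's algorithm: contract a cheapest edge and subtract its cost everywhere). Adding the
  penalty `C + 1` to the edges of `δ(s)` and of `δ(t)` produces a connected spanning `S` of cost at
  most `C` meeting each of these two cuts in exactly one edge.
* Let `T` be the set of vertices whose degree parity in `S` is wrong. A `T`-cut that is an `s`–`t`
  cut meets `S` in an even number of edges, so it is neither `δ(s)` nor `δ(t)` and thus has value at
  least `2`; every other `T`-cut has value at least `2` by the LP. So `x / 2` is feasible for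
  the `T`-cut constraints, and by the Edmonds–Johnson theorem (`tDominated_of_tFeasible`) there is
  a `T`-join `J` of cost at most `C / 2`. The multiset union `S + J` is a tour of cost at most
  `3 C / 2` (`exists_cheap_tour`).
* As `c` is arbitrary, Hahn–Banach separation puts `(3/2) x` in the convex hull of the tours
  `S + J` plus the nonnegative orthant. The orthant part is absorbed: adding an even number of
  copies of an edge to a tour gives a tour (`convexHull_tourSet_add`, `mem_hull_of_cheap`).
  Carathéodory's theorem then provides finitely many tours with positive weights.

The Edmonds–Johnson theorem is proved by induction on the number of vertices, then on the number
of constraints that are not tight. An edge of value at least `1` is contracted; an edge of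
positive value in no tight `T`-cut is decreased; along a tight `T`-cut with at least two vertices
on both sides, the decompositions of the two contractions are glued. Otherwise the only tight
cuts are stars, and a nonzero direction `d` supported on the positive edges preserves all of
them: by counting dimensions, or else because the support is a disjoint union of cycles of
edges whose values are not all `1/2`, or which contains a pair of parallel edges or a 4-cycle.
Then `x` is a convex combination of two feasible points on the line `x + ℝ d` with fewer slack
constraints.

Graphs here are multigraphs given by an edge type `E` with endpoint maps `a b : E → V`, so that a
contraction only changes `V`, `a` and `b`. Subsets `T` of vertices are encoded as functions to
`ZMod 2`.
-/

open Finset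

noncomputable section
open scoped Classical

/-- `δ(U)`: the set of edges (unordered pairs of distinct vertices) with exactly one
endpoint in `U`. -/
def cutEdges {V : Type*} [Fintype V] (U : Finset V) : Finset (Sym2 V) :=
  Finset.univ.filter fun e => ∃ u v : V, e = s(u, v) ∧ u ∈ U ∧ v ∉ U

/-- `f(U) = 1` if `|U ∩ {s,t}| = 1` and `f(U) = 2` otherwise. -/
def lpBound {V : Type*} [Fintype V] (s t : V) (U : Finset V) : ℝ :=
  if (U ∩ {s, t}).card = 1 then 1 else 2

/-- `x` is a feasible solution of the subtour elimination LP for `s`–`t` path TSP. -/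
def SubtourLP {V : Type*} [Fintype V] (s t : V) (x : Sym2 V → ℝ) : Prop :=
  (∀ e : Sym2 V, 0 ≤ x e) ∧
  (∀ v : V, ∑ e ∈ cutEdges {v}, x e = lpBound s t {v}) ∧
  (∀ U : Finset V, U.Nonempty → U ≠ Finset.univ → lpBound s t U ≤ ∑ e ∈ cutEdges U, x e)


/-- `Q` is a narrow cut: an `s`–`t` cut of `x`-value less than `2`. -/
def IsNarrowCut {V : Type*} [Fintype V] (s t : V) (x : Sym2 V → ℝ)
    (Q : Finset (Sym2 V)) : Prop :=
  ∃ U : Finset V, (U ∩ {s, t}).card = 1 ∧ Q = cutEdges U ∧ ∑ e ∈ Q, x e < 2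

/-- The degree of `v` in the multigraph with edge multiplicities `m`. -/
def edgeDegree {V : Type*} [Fintype V] (m : Sym2 V → ℕ) (v : V) : ℕ :=
  ∑ e ∈ Finset.univ.filter (fun e : Sym2 V => v ∈ e), m e

/-- `m` is an `{s,t}`-tour: a multiplicity function on edges whose multigraph is a
connected spanning multigraph in which exactly `s` and `t` have odd degree. -/
def IsSTTour {V : Type*} [Fintype V] (s t : V) (m : Sym2 V → ℕ) : Prop :=
  (∀ e : Sym2 V, e.IsDiag → m e = 0) ∧
  (SimpleGraph.fromEdgeSet {e : Sym2 V | m e ≠ 0}).Connected ∧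
  (∀ v : V, Odd (edgeDegree m v) ↔ v = s ∨ v = t)


universe u v

/-! ### Cuts, joins and contractions -/

/-- The edge `e` with endpoints `a e` and `b e` lies in the cut `δ(U)`. -/
def Crosses {V : Type u} {E : Type v} (a b : E → V) (U : Finset V) (e : E) : Prop :=
  ¬ (a e ∈ U ↔ b e ∈ U)

/-- The value `x(δ(U))`. -/
def cutVal {V : Type u} {E : Type v} [Fintype E] (a b : E → V) (x : E → ℝ)
    (U : Finset V) : ℝ :=
  ∑ e, if Crosses a b U e then x e else 0

/-- The degree of `v` in the edge set `J`, modulo `2`; a loop contributes `1 + 1 = 0`. -/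
def bdry {V : Type u} {E : Type v} (a b : E → V) (J : Finset E) (v : V) : ZMod 2 :=
  ∑ e ∈ J, ((if a e = v then 1 else 0) + (if b e = v then 1 else 0))

/-- `J` is a `T`-join, where the set `T` is given by its indicator function into `ZMod 2`. -/
def IsTJoin {V : Type u} {E : Type v} (a b : E → V) (T : V → ZMod 2) (J : Finset E) : Prop :=
  ∀ v, bdry a b J v = T v

/-- `x` is nonnegative and every `T`-cut (a cut `δ(U)` with `|U ∩ T|` odd) has value at least `1`. -/
def TFeasible {V : Type u} {E : Type v} [Fintype E] (a b : E → V) (T : V → ZMod 2)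
    (x : E → ℝ) : Prop :=
  (∀ e, 0 ≤ x e) ∧ ∀ U : Finset V, ∑ v ∈ U, T v = 1 → 1 ≤ cutVal a b x U

/-- `x` dominates a convex combination of `T`-joins, with weight `w J` on the join `J`. -/
def TDominated {V : Type u} {E : Type v} [Fintype E] (a b : E → V) (T : V → ZMod 2)
    (x : E → ℝ) : Prop :=
  ∃ w : Finset E → ℝ, (∀ J, 0 ≤ w J) ∧ (∀ J, w J ≠ 0 → IsTJoin a b T J) ∧ ∑ J, w J = 1 ∧
    ∀ e, ∑ J, (if e ∈ J then w J else 0) ≤ x e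

/-- The quotient map contracting the vertex set `U` to the single vertex `none`. -/
def collapse {V : Type u} (U : Finset V) (v : V) : Option {v // v ∉ U} :=
  if h : v ∈ U then none else some ⟨v, h⟩

/-- The image of the parity vector `T` under the vertex map `p`. -/
def pushT {V V' : Type u} [Fintype V] (p : V → V') (T : V → ZMod 2) (v' : V') : ZMod 2 :=
  ∑ v, if p v = v' then T v else 0

section basics
variable {V V' : Type u} {E : Type v}

lemma ind_zmod (p q : Prop) [Decidable p] [Decidable q] [Decidable (¬ (p ↔ q))] :
    ((if p then 1 else 0) + (if q then 1 else 0) : ZMod 2)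
    = if ¬ (p ↔ q) then 1 else 0 := by
  by_cases hp : p <;> by_cases hq : q <;> simp [hp, hq]
  decide

/-- The handshake lemma: the degrees over `U` sum to the number of edges leaving `U`, mod `2`. -/
lemma sum_bdry (a b : E → V) (J : Finset E) (U : Finset V) :
    ∑ v ∈ U, bdry a b J v = ((J.filter (Crosses a b U)).card : ZMod 2) := by
  unfold bdry
  rw [Finset.sum_comm]
  simp only [Finset.sum_add_distrib, Finset.sum_ite_eq]
  rw [← Finset.sum_add_distrib]
  simp only [ind_zmod]
  rw [Finset.card_filter]
  push_cast
  refine Finset.sum_congr rfl fun e _ => ?_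
  unfold Crosses
  congr

lemma bdry_comp [Fintype V] (a b : E → V) (p : V → V') (J : Finset E) :
    bdry (p ∘ a) (p ∘ b) J = pushT p (bdry a b J) := by
  funext v'
  unfold bdry pushT
  have : ∀ v, (if p v = v' then ∑ e ∈ J, ((if a e = v then (1 : ZMod 2) else 0) +
      (if b e = v then 1 else 0)) else 0)
      = ∑ e ∈ J, ((if a e = v then (if p v = v' then (1 : ZMod 2) else 0) else 0) +
      (if b e = v then (if p v = v' then (1 : ZMod 2) else 0) else 0)) := by
    intro v
    by_cases h : p v = v' <;> simp [h]
  simp only [this]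
  rw [Finset.sum_comm]
  simp [Finset.sum_add_distrib]

lemma crosses_comp [Fintype V] (a b : E → V) (p : V → V') (U : Finset V') (e : E) :
    Crosses (p ∘ a) (p ∘ b) U e ↔ Crosses a b (univ.filter fun v => p v ∈ U) e := by
  simp [Crosses]

lemma sum_pushT [Fintype V] (p : V → V') (T : V → ZMod 2) (U : Finset V') :
    ∑ v' ∈ U, pushT p T v' = ∑ v ∈ univ.filter (fun v => p v ∈ U), T v := by
  unfold pushT
  rw [Finset.sum_comm, Finset.sum_filter]
  simp

/-- Feasibility survives contraction, the cuts of the image being cuts of the original graph. -/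
lemma TFeasible.comp [Fintype V] [Fintype E] {a b : E → V} {T : V → ZMod 2} {x : E → ℝ}
    (h : TFeasible a b T x) (p : V → V') : TFeasible (p ∘ a) (p ∘ b) (pushT p T) x := by
  refine ⟨h.1, fun U hU => ?_⟩
  rw [sum_pushT] at hU
  have := h.2 _ hU
  simpa only [cutVal, crosses_comp] using this

lemma collapse_eq_some (U : Finset V) (v : V) (w : {v // v ∉ U}) :
    collapse U v = some w ↔ v = w.1 := by
  unfold collapse
  split_ifs with h
  · simp only [false_iff]
    rintro rfl
    exact w.2 h
  · simp [Subtype.ext_iff]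

lemma card_collapse [Fintype V] (U : Finset V) :
    Fintype.card (Option {v // v ∉ U}) + U.card = Fintype.card V + 1 := by
  have h := Finset.card_add_card_compl U
  rw [Fintype.card_option, Fintype.card_subtype]
  have : (univ.filter fun v => v ∉ U) = Uᶜ := by ext; simp
  rw [this]
  omega

/-- Off the contracted set, a join of the contracted graph has the prescribed parities. -/
lemma IsTJoin.of_collapse [Fintype V] {a b : E → V} {T : V → ZMod 2} {U : Finset V}
    {J : Finset E}
    (h : IsTJoin (collapse U ∘ a) (collapse U ∘ b) (pushT (collapse U) T) J) {v : V}
    (hv : v ∉ U) : bdry a b J v = T v := by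
  have h1 := h (some ⟨v, hv⟩)
  rw [bdry_comp] at h1
  simpa [pushT, collapse_eq_some] using h1

/-- Over the contracted set, only the total parity of a join is prescribed. -/
lemma IsTJoin.sum_collapse [Fintype V] {a b : E → V} {T : V → ZMod 2} {U : Finset V}
    {J : Finset E}
    (h : IsTJoin (collapse U ∘ a) (collapse U ∘ b) (pushT (collapse U) T) J) :
    ∑ v ∈ U, bdry a b J v = ∑ v ∈ U, T v := by
  have h1 := h none
  rw [bdry_comp] at h1
  have h2 : ∀ v, collapse U v = none ↔ v ∈ U := by
    intro v; unfold collapse; split_ifs with h <;> simp [h]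
  simpa [pushT, h2] using h1

/-- The joins in a convex combination may be indexed by any finite type, with repetitions. -/
lemma tDominated_of_index [Fintype E] {ι : Type*} [Fintype ι] {a b : E → V} {T : V → ZMod 2}
    {x : E → ℝ} (w : ι → ℝ) (J : ι → Finset E) (hw : ∀ i, 0 ≤ w i)
    (hJ : ∀ i, w i ≠ 0 → IsTJoin a b T (J i)) (hs : ∑ i, w i = 1)
    (hx : ∀ e, ∑ i, (if e ∈ J i then w i else 0) ≤ x e) : TDominated a b T x := by
  refine ⟨fun K => ∑ i, if J i = K then w i else 0, ?_, ?_, ?_, ?_⟩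
  · intro K
    exact Finset.sum_nonneg fun i _ => by split_ifs <;> simp [hw]
  · intro K hK
    obtain ⟨i, _, hi⟩ := Finset.exists_ne_zero_of_sum_ne_zero hK
    split_ifs at hi with h
    · exact h ▸ hJ i hi
    · exact absurd rfl hi
  · rw [Finset.sum_comm]
    simpa using hs
  · intro e
    refine le_trans (le_of_eq ?_) (hx e)
    have : ∀ K : Finset E, (if e ∈ K then ∑ i, (if J i = K then w i else 0) else 0)
        = ∑ i, if J i = K then (if e ∈ K then w i else 0) else 0 := by
      intro K; by_cases h : e ∈ K <;> simp [h]
    simp only [this]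
    rw [Finset.sum_comm]
    simp

lemma TDominated.mono [Fintype E] {a b : E → V} {T : V → ZMod 2} {x y : E → ℝ}
    (h : TDominated a b T x) (hxy : ∀ e, x e ≤ y e) : TDominated a b T y := by
  obtain ⟨w, h1, h2, h3, h4⟩ := h
  exact ⟨w, h1, h2, h3, fun e => (h4 e).trans (hxy e)⟩

lemma TDominated.convex [Fintype E] {a b : E → V} {T : V → ZMod 2} {x y z : E → ℝ}
    (hx : TDominated a b T x) (hy : TDominated a b T y) {p q : ℝ} (hp : 0 ≤ p) (hq : 0 ≤ q)
    (hpq : p + q = 1) (hz : ∀ e, p * x e + q * y e ≤ z e) : TDominated a b T z := by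
  obtain ⟨w, h1, h2, h3, h4⟩ := hx
  obtain ⟨w', h1', h2', h3', h4'⟩ := hy
  refine ⟨fun J => p * w J + q * w' J, ?_, ?_, ?_, ?_⟩
  · intro J
    have := h1 J
    have := h1' J
    positivity
  · intro J hJ
    by_cases h : w J = 0
    · apply h2'
      intro h'
      simp [h, h'] at hJ
    · exact h2 J h
  · rw [Finset.sum_add_distrib, ← Finset.mul_sum, ← Finset.mul_sum, h3, h3']
    linarith
  · intro e
    have : ∀ J : Finset E, (if e ∈ J then p * w J + q * w' J else 0)
        = p * (if e ∈ J then w J else 0) + q * (if e ∈ J then w' J else 0) := by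
      intro J; split_ifs <;> simp
    simp only [this]
    rw [Finset.sum_add_distrib, ← Finset.mul_sum, ← Finset.mul_sum]
    have := mul_le_mul_of_nonneg_left (h4 e) hp
    have := mul_le_mul_of_nonneg_left (h4' e) hq
    linarith [hz e]

lemma zmod_aux1 : ∀ p q r s : ZMod 2, p + q = r + s → p = r → q = s := by decide

lemma zmod_aux2 : ∀ p q r s : ZMod 2, p + q = r + s → p ≠ r → 1 + p = r ∧ 1 + q = s := by
  decide

lemma zmod_aux3 : ∀ p q : ZMod 2, p + q = 1 + 0 + p + (0 + 1 + q) := by decide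

lemma bdry_insert_erase (a b : E → V) (J : Finset E) (e : E) (v : V) :
    bdry a b (insert e (J.erase e)) v = ((if a e = v then 1 else 0) +
        (if b e = v then 1 else 0)) + bdry a b (J.erase e) v := by
  unfold bdry
  rw [Finset.sum_insert (by simp)]

/-- An edge of value at least `1` may be contracted: it is free to use it or not, whichever corrects
the parity at its endpoints. -/
lemma tDominated_of_one_le [Fintype V] [Fintype E] {a b : E → V} {T : V → ZMod 2} {x : E → ℝ}
    {e : E} (hab : a e ≠ b e) (he : 1 ≤ x e)
    (h : TDominated (collapse {a e, b e} ∘ a) (collapse {a e, b e} ∘ b)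
      (pushT (collapse {a e, b e}) T) x) : TDominated a b T x := by
  obtain ⟨w, h1, h2, h3, h4⟩ := h
  let K : Finset E → Finset E := fun J =>
    if bdry a b (J.erase e) (a e) = T (a e) then J.erase e else insert e (J.erase e)
  have hK : ∀ J f, f ≠ e → (f ∈ K J ↔ f ∈ J) := by
    intro J f hf
    simp only [K]
    split_ifs <;> simp [hf]
  refine tDominated_of_index w K h1 ?_ h3 ?_
  · intro J hJ
    have hT := h2 J hJ
    have hsum' : bdry a b (J.erase e) (a e) + bdry a b (J.erase e) (b e)
        = T (a e) + T (b e) := by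
      have hsum := hT.sum_collapse
      rw [Finset.sum_pair hab, Finset.sum_pair hab] at hsum
      rw [← hsum]
      by_cases heJ : e ∈ J
      · have h1 := bdry_insert_erase a b J e (a e)
        have h2 := bdry_insert_erase a b J e (b e)
        rw [Finset.insert_erase heJ] at h1 h2
        rw [if_pos rfl, if_neg hab.symm] at h1
        rw [if_neg hab, if_pos rfl] at h2
        rw [h1, h2]
        exact zmod_aux3 _ _
      · rw [Finset.erase_eq_of_notMem heJ]
    intro v
    by_cases hva : v ∈ ({a e, b e} : Finset V)
    · simp only [K]
      split_ifs with hc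
      · rcases (by simpa using hva : v = a e ∨ v = b e) with rfl | rfl
        · exact hc
        · exact zmod_aux1 _ _ _ _ hsum' hc
      · have := zmod_aux2 _ _ _ _ hsum' hc
        rw [bdry_insert_erase]
        rcases (by simpa using hva : v = a e ∨ v = b e) with rfl | rfl
        · rw [if_pos rfl, if_neg hab.symm, add_zero]; exact this.1
        · rw [if_neg hab, if_pos rfl, zero_add]; exact this.2
    · have hv := hT.of_collapse hva
      have hva1 : a e ≠ v := by rintro rfl; simp at hva
      have hva2 : b e ≠ v := by rintro rfl; simp at hva
      have hins := bdry_insert_erase a b J e v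
      rw [if_neg hva1, if_neg hva2, zero_add, zero_add] at hins
      have : bdry a b (J.erase e) v = T v := by
        by_cases heJ : e ∈ J
        · rw [← hins, Finset.insert_erase heJ, hv]
        · rw [Finset.erase_eq_of_notMem heJ, hv]
      simp only [K]
      split_ifs with hc
      · exact this
      · rw [hins, this]
  · intro f
    by_cases hf : f = e
    · subst hf
      refine le_trans ?_ he
      rw [← h3]
      exact Finset.sum_le_sum fun J _ => by split_ifs <;> simp [h1]
    · simp only [hK _ f hf]
      exact h4 f

end basics

/-! ### Gluing along a tight cut -/

section polyhedron
variable {V : Type u} {E : Type v}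

lemma cutVal_eq_sum_filter [Fintype E] (a b : E → V) (x : E → ℝ) (U : Finset V) :
    cutVal a b x U = ∑ e ∈ univ.filter (Crosses a b U), x e := by
  rw [cutVal, Finset.sum_filter]

lemma bdry_congr {a b : E → V} {J K : Finset E} {v : V}
    (h : ∀ e, (a e = v ∨ b e = v) → (e ∈ J ↔ e ∈ K)) : bdry a b J v = bdry a b K v := by
  unfold bdry
  have key : ∀ L : Finset E, ∑ e ∈ L, ((if a e = v then (1 : ZMod 2) else 0) +
      (if b e = v then 1 else 0)) = ∑ e ∈ L.filter (fun e => a e = v ∨ b e = v),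
      ((if a e = v then (1 : ZMod 2) else 0) + (if b e = v then 1 else 0)) := by
    intro L
    symm
    apply Finset.sum_filter_of_ne
    intro e _ he
    by_contra hc
    push Not at hc
    simp [hc.1, hc.2] at he
  rw [key J, key K]
  congr 1
  ext e
  simp only [mem_filter]
  constructor
  · rintro ⟨h1, h2⟩; exact ⟨(h e h2).1 h1, h2⟩
  · rintro ⟨h1, h2⟩; exact ⟨(h e h2).2 h1, h2⟩

/-- If `Q` has value `1` and is met by every edge set in the combination, then each of them meets
`Q` in exactly one edge and the domination is an equality on `Q`. -/
lemma tight_marginals [Fintype E] {x : E → ℝ} {Q : Finset E} (hQ : ∑ e ∈ Q, x e = 1)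
    {w : Finset E → ℝ} (hw : ∀ J, 0 ≤ w J) (hs : ∑ J, w J = 1)
    (hx : ∀ e, ∑ J, (if e ∈ J then w J else 0) ≤ x e)
    (hodd : ∀ J, w J ≠ 0 → 1 ≤ (Q ∩ J).card) :
    (∀ e ∈ Q, ∑ J, (if e ∈ J then w J else 0) = x e) ∧
    (∀ J, w J ≠ 0 → (Q ∩ J).card = 1) := by
  have h1 : ∑ e ∈ Q, ∑ J, (if e ∈ J then w J else 0) = ∑ J, w J * (Q ∩ J).card := by
    rw [Finset.sum_comm]
    refine Finset.sum_congr rfl fun J _ => ?_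
    rw [← Finset.sum_filter, Finset.sum_const, nsmul_eq_mul, mul_comm, Finset.filter_mem_eq_inter]
  have h2 : ∀ J, w J ≤ w J * (Q ∩ J).card := by
    intro J
    by_cases h : w J = 0
    · simp [h]
    · have : (1 : ℝ) ≤ (Q ∩ J).card := by exact_mod_cast hodd J h
      nlinarith [hw J]
  have h3 : ∑ e ∈ Q, ∑ J, (if e ∈ J then w J else 0) ≤ ∑ e ∈ Q, x e :=
    Finset.sum_le_sum fun e _ => hx e
  have h4 : ∑ J, w J ≤ ∑ J, w J * (Q ∩ J).card := Finset.sum_le_sum fun J _ => h2 J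
  constructor
  · exact (Finset.sum_eq_sum_iff_of_le fun e _ => hx e).1 (by linarith)
  · intro J hJ
    have := (Finset.sum_eq_sum_iff_of_le fun J _ => h2 J).1
      (by linarith : ∑ J, w J = ∑ J, w J * (Q ∩ J).card) J (mem_univ J)
    have h5 : w J * ((Q ∩ J).card - 1 : ℝ) = 0 := by linarith
    rcases mul_eq_zero.1 h5 with h | h
    · exact absurd h hJ
    · exact_mod_cast (by linarith : ((Q ∩ J).card : ℝ) = 1)

/-- Sampling an edge `e ∈ Q` with probability `x e`, then `J₁ ∋ e` and `J₂ ∋ e` independently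
according to `w₁` and `w₂`, couples the two distributions; under this coupling `J₁` still contains
any given edge `f` with probability at most `x f`. Terms with `x e = 0` vanish as `r / 0 = 0`. -/
lemma coupling_marginal [Fintype E] {x : E → ℝ} {Q : Finset E}
    {w₁ w₂ : Finset E → ℝ} (hw₁ : ∀ J, 0 ≤ w₁ J)
    (hx₁ : ∀ e, ∑ J, (if e ∈ J then w₁ J else 0) ≤ x e)
    (hm₂ : ∀ e ∈ Q, ∑ J, (if e ∈ J then w₂ J else 0) = x e)
    (hc₁ : ∀ J, w₁ J ≠ 0 → (Q ∩ J).card = 1) (f : E) :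
    ∑ J₁, ∑ J₂, (if f ∈ J₁ then
      ∑ e ∈ Q, (if e ∈ J₁ then w₁ J₁ else 0) * (if e ∈ J₂ then w₂ J₂ else 0) / x e else 0)
      ≤ x f := by
  refine le_trans (Finset.sum_le_sum fun J₁ _ => ?_) (hx₁ f)
  by_cases hf : f ∈ J₁
  · simp only [hf, if_true]
    rw [Finset.sum_comm]
    simp only [← Finset.mul_sum, ← Finset.sum_div]
    have h1 : ∑ e ∈ Q, (if e ∈ J₁ then w₁ J₁ else 0) *
        (∑ J₂, (if e ∈ J₂ then w₂ J₂ else 0)) / x e ≤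
        ∑ e ∈ Q, (if e ∈ J₁ then w₁ J₁ else 0) := by
      refine Finset.sum_le_sum fun e he => ?_
      rw [hm₂ e he]
      by_cases hxe : x e = 0
      · simp only [hxe, div_zero]
        split_ifs <;> simp [hw₁]
      · rw [mul_div_cancel_right₀ _ hxe]
    refine h1.trans ?_
    rw [← Finset.sum_filter, Finset.sum_const, nsmul_eq_mul, Finset.filter_mem_eq_inter]
    by_cases h : w₁ J₁ = 0
    · simp [h]
    · simp [hc₁ _ h]
  · simp [hf]

/-- Gluing along a tight `T`-cut `δ(U)`: joins of the two contractions sharing their unique edge in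
`δ(U)` combine to a join of the whole graph, which uses `p.2` inside `U` and `p.1` elsewhere. -/
lemma tDominated_of_tight [Fintype V] [Fintype E] {a b : E → V} {T : V → ZMod 2} {x : E → ℝ}
    (hx : ∀ e, 0 ≤ x e) {U : Finset V} (hU : ∑ v ∈ U, T v = 1)
    (hU' : ∑ v ∈ Uᶜ, T v = 1) (ht : cutVal a b x U = 1)
    (h₁ : TDominated (collapse U ∘ a) (collapse U ∘ b) (pushT (collapse U) T) x)
    (h₂ : TDominated (collapse Uᶜ ∘ a) (collapse Uᶜ ∘ b) (pushT (collapse Uᶜ) T) x) :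
    TDominated a b T x := by
  obtain ⟨w₁, hw₁, hJ₁, hs₁, hx₁⟩ := h₁
  obtain ⟨w₂, hw₂, hJ₂, hs₂, hx₂⟩ := h₂
  set Q : Finset E := univ.filter (Crosses a b U) with hQdef
  have hQ : ∑ e ∈ Q, x e = 1 := by rw [← cutVal_eq_sum_filter]; exact ht
  have hcompl : ∀ e, Crosses a b Uᶜ e ↔ Crosses a b U e := by
    intro e; simp only [Crosses, mem_compl]; tauto
  have hcard : ∀ J : Finset E, ((Q ∩ J).card : ZMod 2) = 1 → 1 ≤ (Q ∩ J).card := by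
    intro J h
    by_contra hc
    have : (Q ∩ J).card = 0 := by omega
    rw [this] at h
    simp at h
  have hQJ : ∀ J : Finset E, J.filter (Crosses a b U) = Q ∩ J := by
    intro J; ext e; simp [hQdef, and_comm]
  obtain ⟨hm₁, hc₁⟩ := tight_marginals hQ hw₁ hs₁ hx₁ (fun J hJ => hcard J (by
    rw [← hQJ, ← sum_bdry, (hJ₁ J hJ).sum_collapse, hU]))
  obtain ⟨hm₂, hc₂⟩ := tight_marginals hQ hw₂ hs₂ hx₂ (fun J hJ => hcard J (by
    have := (hJ₂ J hJ).sum_collapse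
    rw [sum_bdry, hU'] at this
    simp only [hcompl] at this
    rw [← hQJ, this]))
  let w : Finset E × Finset E → ℝ := fun p =>
    ∑ e ∈ Q, (if e ∈ p.1 then w₁ p.1 else 0) * (if e ∈ p.2 then w₂ p.2 else 0) / x e
  let K : Finset E × Finset E → Finset E := fun p =>
    univ.filter fun e => if a e ∈ U ∧ b e ∈ U then e ∈ p.2 else e ∈ p.1
  have hterm : ∀ (J₁ J₂ : Finset E) (e : E), 0 ≤ (if e ∈ J₁ then w₁ J₁ else 0) *
      (if e ∈ J₂ then w₂ J₂ else 0) / x e := by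
    intro J₁ J₂ e
    have := hw₁ J₁
    have := hw₂ J₂
    have := hx e
    split_ifs <;> positivity
  refine tDominated_of_index w K (fun p => Finset.sum_nonneg fun e _ => hterm _ _ e) ?_ ?_ ?_
  · rintro ⟨J₁, J₂⟩ hp
    obtain ⟨e, heQ, he⟩ := Finset.exists_ne_zero_of_sum_ne_zero hp
    have he1 : e ∈ J₁ := by by_contra h; simp [h] at he
    have he2 : e ∈ J₂ := by by_contra h; simp [h] at he
    have hn1 : w₁ J₁ ≠ 0 := by intro h; simp [h] at he
    have hn2 : w₂ J₂ ≠ 0 := by intro h; simp [h] at he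
    have huniq : ∀ J : Finset E, (Q ∩ J).card = 1 → e ∈ J → ∀ f ∈ Q, (f ∈ J ↔ f = e) := by
      intro J hJ heJ f hf
      obtain ⟨g, hg⟩ := Finset.card_eq_one.1 hJ
      have h1 : e ∈ Q ∩ J := by simp [heQ, heJ]
      rw [hg, mem_singleton] at h1
      subst h1
      rw [← mem_singleton, ← hg]
      simp [hf]
    have hu1 := huniq J₁ (hc₁ _ hn1) he1
    have hu2 := huniq J₂ (hc₂ _ hn2) he2
    intro v
    by_cases hv : v ∈ U
    · rw [← (hJ₂ J₂ hn2).of_collapse (v := v) (by simp [hv])]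
      apply bdry_congr
      intro f hf
      by_cases hin : a f ∈ U ∧ b f ∈ U
      · simp [K, hin]
      · have hfQ : f ∈ Q := by
          simp only [hQdef, mem_filter, mem_univ, true_and, Crosses]
          rcases hf with rfl | rfl <;> tauto
        simp [K, hin, hu1 f hfQ, hu2 f hfQ]
    · rw [← (hJ₁ J₁ hn1).of_collapse (v := v) hv]
      apply bdry_congr
      intro f hf
      have hin : ¬ (a f ∈ U ∧ b f ∈ U) := by
        rcases hf with rfl | rfl <;> tauto
      simp [K, hin]
  · rw [Fintype.sum_prod_type]
    simp only [w]
    have : ∀ J₁ : Finset E, ∑ J₂ : Finset E, ∑ e ∈ Q, (if e ∈ J₁ then w₁ J₁ else 0) *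
        (if e ∈ J₂ then w₂ J₂ else 0) / x e = ∑ e ∈ Q, (if e ∈ J₁ then w₁ J₁ else 0) *
        x e / x e := by
      intro J₁
      rw [Finset.sum_comm]
      refine Finset.sum_congr rfl fun e he => ?_
      rw [← Finset.sum_div, ← Finset.mul_sum, hm₂ e he]
    simp only [this]
    rw [Finset.sum_comm, ← hQ]
    refine Finset.sum_congr rfl fun e he => ?_
    rw [← Finset.sum_div, ← Finset.sum_mul, hm₁ e he]
    by_cases hxe : x e = 0
    · simp [hxe]
    · field_simp
  · intro f
    rw [Fintype.sum_prod_type]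
    by_cases hin : a f ∈ U ∧ b f ∈ U
    · have := coupling_marginal hw₂ hx₂ hm₁ hc₂ f
      rw [Finset.sum_comm] at this
      refine le_trans (le_of_eq ?_) this
      refine Finset.sum_congr rfl fun J₁ _ => Finset.sum_congr rfl fun J₂ _ => ?_
      simp only [K, w, mem_filter, mem_univ, true_and, hin, and_self, if_true]
      congr 1
      exact Finset.sum_congr rfl fun e _ => by rw [mul_comm]
    · have := coupling_marginal hw₁ hx₁ hm₂ hc₁ f
      refine le_trans (le_of_eq ?_) this
      refine Finset.sum_congr rfl fun J₁ _ => Finset.sum_congr rfl fun J₂ _ => ?_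
      simp only [K, w, mem_filter, mem_univ, true_and, hin, if_false]

/-- Ratio test: constraints with nonnegative slacks `g` and slopes `s`, the tight ones being
stationary, stay satisfied until one more of them becomes tight. -/
lemma exists_step {I : Type*} [Fintype I] (g s : I → ℝ) (hg : ∀ i, 0 ≤ g i)
    (h0 : ∀ i, g i = 0 → s i = 0) (hneg : ∃ i, s i < 0) :
    ∃ ε : ℝ, 0 < ε ∧ (∀ i, 0 ≤ g i + ε * s i) ∧
      (univ.filter fun i => g i + ε * s i ≠ 0).card < (univ.filter fun i => g i ≠ 0).card := by
  obtain ⟨i₀, hi₀⟩ := hneg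
  obtain ⟨j, hj, hmin⟩ := Finset.exists_min_image (univ.filter fun i => s i < 0)
    (fun i => g i / (- s i)) ⟨i₀, by simp [hi₀]⟩
  simp only [mem_filter, mem_univ, true_and] at hj hmin
  have hgj : 0 < g j := lt_of_le_of_ne (hg j) fun h => by
    have := h0 j h.symm
    linarith
  refine ⟨g j / (- s j), div_pos hgj (by linarith), ?_, ?_⟩
  · intro i
    by_cases hi : s i < 0
    · have := hmin i hi
      rw [le_div_iff₀ (by linarith)] at this
      linarith
    · have : 0 ≤ g j / (- s j) := (div_pos hgj (by linarith)).le
      have := mul_nonneg this (not_lt.1 hi)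
      linarith [hg i]
  · apply Finset.card_lt_card
    rw [Finset.ssubset_iff_of_subset]
    · refine ⟨j, by simp [hgj.ne'], ?_⟩
      have : s j ≠ 0 := hj.ne
      simp only [mem_filter, mem_univ, true_and, not_not]
      field_simp
      ring
    · intro i
      simp only [mem_filter, mem_univ, true_and]
      intro hi h
      apply hi
      rw [h, h0 i h]
      simp

end polyhedron

/-! ### Edmonds–Johnson: the `T`-join dominant -/

section kernel
variable {V : Type u} {E : Type v}

/-- `e` joins `u` and `v`. -/
def Joins (a b : E → V) (e : E) (u v : V) : Prop := (a e = u ∧ b e = v) ∨ (a e = v ∧ b e = u)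

lemma Joins.crosses {a b : E → V} {e : E} {u v : V} (h : Joins a b e u v) (U : Finset V) :
    Crosses a b U e ↔ ¬ (u ∈ U ↔ v ∈ U) := by
  rcases h with ⟨rfl, rfl⟩ | ⟨rfl, rfl⟩ <;> simp only [Crosses]
  tauto

lemma exists_joins_of_crosses {a b : E → V} {e : E} {U : Finset V} (h : Crosses a b U e) :
    ∃ u ∈ U, ∃ v, v ∉ U ∧ Joins a b e u v := by
  unfold Crosses at h
  by_cases h1 : a e ∈ U
  · exact ⟨a e, h1, b e, by tauto, Or.inl ⟨rfl, rfl⟩⟩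
  · exact ⟨b e, by tauto, a e, h1, Or.inr ⟨rfl, rfl⟩⟩

lemma cutVal_compl [Fintype V] [Fintype E] (a b : E → V) (x : E → ℝ) (U : Finset V) :
    cutVal a b x Uᶜ = cutVal a b x U := by
  unfold cutVal
  refine Finset.sum_congr rfl fun e _ => ?_
  have : Crosses a b Uᶜ e ↔ Crosses a b U e := by simp only [Crosses, mem_compl]; tauto
  simp only [this]

lemma cutVal_single [Fintype E] (a b : E → V) (e : E) (r : ℝ) (U : Finset V) :
    cutVal a b (Pi.single e r) U = if Crosses a b U e then r else 0 := by
  unfold cutVal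
  rw [Finset.sum_eq_single e]
  · simp
  · intro f _ hf
    simp [Pi.single_eq_of_ne hf]
  · simp

lemma cutVal_add [Fintype E] (a b : E → V) (x y : E → ℝ) (U : Finset V) :
    cutVal a b (x + y) U = cutVal a b x U + cutVal a b y U := by
  unfold cutVal
  rw [← Finset.sum_add_distrib]
  exact Finset.sum_congr rfl fun e _ => by split_ifs <;> simp

lemma cutVal_smul [Fintype E] (a b : E → V) (r : ℝ) (x : E → ℝ) (U : Finset V) :
    cutVal a b (r • x) U = r * cutVal a b x U := by
  unfold cutVal
  rw [Finset.mul_sum]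
  exact Finset.sum_congr rfl fun e _ => by split_ifs <;> simp

lemma cutVal_eq_sum_supp [Fintype E] (a b : E → V) (x : E → ℝ) (U : Finset V)
    (D : Finset E) (hD : ∀ e, x e ≠ 0 → Crosses a b U e → e ∈ D)
    (hD' : ∀ e ∈ D, Crosses a b U e) :
    cutVal a b x U = ∑ e ∈ D, x e := by
  rw [cutVal_eq_sum_filter]
  symm
  apply Finset.sum_subset
  · intro e he; simp [hD' e he]
  · intro e he heD
    by_contra hx
    exact heD (hD e hx (by simpa using he))

/-- With fewer tight stars than edges in the support of `x`, some nonzero direction in the support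
preserves the values of all these stars, by comparing dimensions. -/
lemma exists_kernel_of_card_lt [Fintype V] [Fintype E] (a b : E → V) (x : E → ℝ) (A : Finset V)
    (h : A.card < (univ.filter fun e => x e ≠ 0).card) :
    ∃ d : E → ℝ, d ≠ 0 ∧ (∀ e, x e = 0 → d e = 0) ∧ ∀ v ∈ A, cutVal a b d {v} = 0 := by
  let ext0 : ({e // x e ≠ 0} → ℝ) →ₗ[ℝ] (E → ℝ) :=
    { toFun := fun d e => if h : x e ≠ 0 then d ⟨e, h⟩ else 0
      map_add' := by intro d d'; funext e; by_cases h : x e = 0 <;> simp [h]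
      map_smul' := by intro r d; funext e; by_cases h : x e = 0 <;> simp [h] }
  let cuts : (E → ℝ) →ₗ[ℝ] (A → ℝ) :=
    { toFun := fun d v => cutVal a b d {v.1}
      map_add' := by intro d d'; funext v; exact cutVal_add _ _ _ _ _
      map_smul' := by intro r d; funext v; exact cutVal_smul _ _ _ _ _ }
  have hk : LinearMap.ker (cuts ∘ₗ ext0) ≠ ⊥ := by
    apply LinearMap.ker_ne_bot_of_finrank_lt
    rw [Module.finrank_fintype_fun_eq_card, Module.finrank_fintype_fun_eq_card,
      Fintype.card_coe, Fintype.card_subtype]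
    exact h
  obtain ⟨d, hd, hd0⟩ := Submodule.exists_mem_ne_zero_of_ne_bot hk
  refine ⟨ext0 d, ?_, ?_, ?_⟩
  · intro h
    apply hd0
    funext e
    have := congrFun h e.1
    simpa [ext0, e.2] using this
  · intro e he
    simp [ext0, he]
  · intro v hv
    exact congrFun (LinearMap.mem_ker.1 hd) ⟨v, hv⟩

/-- With at least as many tight stars as edges in the support of `x`, double counting makes the
support a 2-regular graph on `A`. If some value differs from `1/2`, then `x - 1/2` is a direction
preserving all stars. Otherwise two parallel edges, or a 4-cycle, with alternating signs provide
one: for `v` with neighbours `p ≠ q`, the `T`-cut around `{v, p, q}` has value `1`, so it is a star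
by hypothesis and the cycle through `v` closes up at a fourth vertex. -/
lemma exists_kernel_of_card_le [Fintype V] [Fintype E] (a b : E → V) (T : V → ZMod 2)
    (x : E → ℝ) (hx : TFeasible a b T x) (A : Finset V) (hne : ∃ e, x e ≠ 0)
    (hlt : ∀ e, x e < 1) (hAT : ∀ v ∈ A, T v = 1) (hA : ∀ v ∈ A, cutVal a b x {v} = 1)
    (htriv : ∀ U : Finset V, ∑ v ∈ U, T v = 1 → cutVal a b x U = 1 →
      U.card ≤ 1 ∨ Uᶜ.card ≤ 1)
    (hcard : (univ.filter fun e => x e ≠ 0).card ≤ A.card) :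
    ∃ d : E → ℝ, d ≠ 0 ∧ (∀ e, x e = 0 → d e = 0) ∧ ∀ v ∈ A, cutVal a b d {v} = 0 := by
  set S : Finset E := univ.filter fun e => x e ≠ 0 with hS
  let D : V → Finset E := fun v => S.filter (Crosses a b {v})
  have hD : ∀ v (y : E → ℝ), (∀ e, x e = 0 → y e = 0) →
      cutVal a b y {v} = ∑ e ∈ D v, y e := by
    intro v y hy
    apply cutVal_eq_sum_supp
    · intro e he hc
      have : x e ≠ 0 := fun h => he (hy e h)
      simp [D, hS, this, hc]
    · intro e he
      exact (mem_filter.1 he).2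
  have hdeg : ∀ v ∈ A, 2 ≤ (D v).card := by
    intro v hv
    have h1 := hD v x (fun _ h => h)
    rw [hA v hv] at h1
    by_contra hc
    rcases (by omega : (D v).card = 0 ∨ (D v).card = 1) with h | h
    · rw [Finset.card_eq_zero.1 h] at h1; simp at h1
    · obtain ⟨e, he⟩ := Finset.card_eq_one.1 h
      rw [he, Finset.sum_singleton] at h1
      linarith [hlt e]
  have hends : ∀ e, (A.filter fun v => Crosses a b {v} e) ⊆ {a e, b e} := by
    intro e v hv
    have := (mem_filter.1 hv).2
    simp only [Crosses, mem_singleton] at this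
    simp only [mem_insert, mem_singleton]
    by_contra hc
    push Not at hc
    exact this ⟨fun h => absurd h.symm hc.1, fun h => absurd h.symm hc.2⟩
  have hends2 : ∀ e, (A.filter fun v => Crosses a b {v} e).card ≤ 2 := fun e =>
    (Finset.card_le_card (hends e)).trans Finset.card_le_two
  have hdc : ∑ v ∈ A, (D v).card = ∑ e ∈ S, (A.filter fun v => Crosses a b {v} e).card := by
    simp only [D, Finset.card_filter]
    exact Finset.sum_comm
  have hlow : ∑ v ∈ A, 2 ≤ ∑ v ∈ A, (D v).card := Finset.sum_le_sum hdeg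
  have hupp : ∑ e ∈ S, (A.filter fun v => Crosses a b {v} e).card ≤ ∑ e ∈ S, 2 :=
    Finset.sum_le_sum fun e _ => hends2 e
  have hcmp : ∑ e ∈ S, 2 ≤ ∑ v ∈ A, 2 := by simp only [Finset.sum_const, smul_eq_mul]; omega
  have hdeg2 : ∀ v ∈ A, 2 = (D v).card :=
    (Finset.sum_eq_sum_iff_of_le hdeg).1 (by omega)
  have hends3 : ∀ e ∈ S, (A.filter fun v => Crosses a b {v} e).card = 2 :=
    (Finset.sum_eq_sum_iff_of_le fun e _ => hends2 e).1 (by omega)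
  have hSA : ∀ e ∈ S, a e ∈ A ∧ b e ∈ A := by
    intro e he
    have heq := Finset.eq_of_subset_of_card_le (hends e)
      (by rw [hends3 e he]; exact Finset.card_le_two)
    constructor
    · have : a e ∈ A.filter fun v => Crosses a b {v} e := by rw [heq]; simp
      exact (mem_filter.1 this).1
    · have : b e ∈ A.filter fun v => Crosses a b {v} e := by rw [heq]; simp
      exact (mem_filter.1 this).1
  by_cases hhalf : ∃ e, x e ≠ 0 ∧ x e ≠ 1 / 2
  · obtain ⟨e₀, he₀, he₀'⟩ := hhalf
    have hd0 : ∀ e, x e = 0 → (if x e = 0 then (0 : ℝ) else x e - 1 / 2) = 0 := by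
      intro e he; simp [he]
    refine ⟨fun e => if x e = 0 then 0 else x e - 1 / 2, ?_, hd0, ?_⟩
    · intro h
      have := congrFun h e₀
      simp only [he₀, if_false, Pi.zero_apply] at this
      exact he₀' (by linarith)
    · intro v hv
      rw [hD v _ hd0]
      have h1 := hD v x (fun _ h => h)
      rw [hA v hv] at h1
      have : ∀ e ∈ D v, (if x e = 0 then (0 : ℝ) else x e - 1 / 2) = x e - 1 / 2 := by
        intro e he
        have : x e ≠ 0 := by
          have := (mem_filter.1 he).1
          simpa [hS] using this
        simp [this]
      rw [Finset.sum_congr rfl this, Finset.sum_sub_distrib, ← h1, Finset.sum_const,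
        ← hdeg2 v hv]
      norm_num
  push Not at hhalf
  obtain ⟨e₀, he₀⟩ := hne
  have hv := (hSA e₀ (by simp [hS, he₀])).1
  set v := a e₀ with hvdef
  clear_value v
  -- every edge at a vertex of `A` has exactly one companion there
  have hother : ∀ p ∈ A, ∀ e ∈ D p, ∃ f, f ≠ e ∧ D p = {e, f} := by
    intro p hp e he
    obtain ⟨f, g, hfg, hDp⟩ := Finset.card_eq_two.1 (hdeg2 p hp).symm
    rw [hDp] at he
    rcases (by simpa using he : e = f ∨ e = g) with rfl | rfl
    · exact ⟨g, hfg.symm, hDp⟩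
    · exact ⟨f, hfg, by rw [hDp, Finset.pair_comm]⟩
  have hDmem : ∀ p e, e ∈ D p ↔ x e ≠ 0 ∧ Crosses a b {p} e := by
    intro p e; simp [D, hS]
  have hJoin : ∀ p e, e ∈ D p → ∃ q, q ≠ p ∧ Joins a b e p q ∧ q ∈ A ∧ e ∈ D q := by
    intro p e he
    have he' := (hDmem p e).1 he
    obtain ⟨p', hp', q, hq, hj⟩ := exists_joins_of_crosses he'.2
    rw [mem_singleton] at hp' hq
    subst hp'
    have hab := hSA e (by simp [hS, he'.1])
    refine ⟨q, hq, hj, ?_, ?_⟩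
    · rcases hj with ⟨_, h⟩ | ⟨h, _⟩
      · exact h ▸ hab.2
      · exact h ▸ hab.1
    · rw [hDmem]
      refine ⟨he'.1, ?_⟩
      rw [hj.crosses]
      simp [Ne.symm hq]
  obtain ⟨e₁, e₂, h12, hDv⟩ := Finset.card_eq_two.1 (hdeg2 v hv).symm
  have he1v : e₁ ∈ D v := by rw [hDv]; simp
  have he2v : e₂ ∈ D v := by rw [hDv]; simp
  obtain ⟨p, hpv, hj1, hpA, he1p⟩ := hJoin v e₁ he1v
  obtain ⟨q, hqv, hj2, hqA, he2q⟩ := hJoin v e₂ he2v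
  have hx1 := ((hDmem _ _).1 he1v).1
  have hx2 := ((hDmem _ _).1 he2v).1
  by_cases hpq : p = q
  · subst hpq
    refine ⟨Pi.single e₁ 1 + Pi.single e₂ (-1), ?_, ?_, ?_⟩
    · intro h
      have := congrFun h e₁
      simp [Pi.single_eq_of_ne h12] at this
    · intro e he
      have h1 : e ≠ e₁ := by rintro rfl; exact hx1 he
      have h2 : e ≠ e₂ := by rintro rfl; exact hx2 he
      simp [Pi.single_eq_of_ne h1, Pi.single_eq_of_ne h2]
    · intro r _
      rw [cutVal_add, cutVal_single, cutVal_single]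
      simp only [hj1.crosses, hj2.crosses]
      split_ifs <;> simp
  obtain ⟨e₃, h31, hDp⟩ := hother p hpA e₁ he1p
  obtain ⟨e₄, h42, hDq⟩ := hother q hqA e₂ he2q
  have hx3 : x e₃ ≠ 0 := ((hDmem p e₃).1 (by rw [hDp]; simp)).1
  have hx4 : x e₄ ≠ 0 := ((hDmem q e₄).1 (by rw [hDq]; simp)).1
  let U : Finset V := {v, p, q}
  have hUT : ∑ r ∈ U, T r = 1 := by
    have : ∑ r ∈ U, T r = T v + (T p + T q) := by
      simp only [U]
      rw [Finset.sum_insert (by simp [Ne.symm hpv, Ne.symm hqv]), Finset.sum_pair hpq]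
    rw [this, hAT v hv, hAT p hpA, hAT q hqA]
    decide
  have hcr : ∀ e, x e ≠ 0 → Crosses a b U e → e = e₃ ∨ e = e₄ := by
    intro e he hc
    obtain ⟨r, hr, r', hr', hj⟩ := exists_joins_of_crosses hc
    have hne1 : e ≠ e₁ := by
      rintro rfl; rw [hj1.crosses] at hc; simp [U] at hc
    have hne2 : e ≠ e₂ := by
      rintro rfl; rw [hj2.crosses] at hc; simp [U] at hc
    have herr : e ∈ D r := by
      rw [hDmem, hj.crosses]
      refine ⟨he, ?_⟩
      have : r' ≠ r := by rintro rfl; exact hr' hr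
      simp [this]
    rcases (by simpa [U] using hr : r = v ∨ r = p ∨ r = q) with rfl | rfl | rfl
    · rw [hDv] at herr; simp [hne1, hne2] at herr
    · rw [hDp] at herr; simp [hne1] at herr; exact Or.inl herr
    · rw [hDq] at herr; simp [hne2] at herr; exact Or.inr herr
  have hfeasU := hx.2 U hUT
  have hUval := cutVal_eq_sum_supp a b x U (({e₃, e₄} : Finset E).filter (Crosses a b U))
    (by intro e he hc; simp only [mem_filter, mem_insert, mem_singleton]; exact ⟨hcr e he hc, hc⟩)
    (by intro e he; exact (mem_filter.1 he).2)
  have hx3' := hhalf e₃ hx3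
  have hx4' := hhalf e₄ hx4
  have hcardF : 2 ≤ (({e₃, e₄} : Finset E).filter (Crosses a b U)).card := by
    have : ∑ e ∈ ({e₃, e₄} : Finset E).filter (Crosses a b U), x e
        = ∑ e ∈ ({e₃, e₄} : Finset E).filter (Crosses a b U), (1 / 2 : ℝ) := by
      refine Finset.sum_congr rfl fun e he => ?_
      rcases (by simpa using (mem_filter.1 he).1 : e = e₃ ∨ e = e₄) with rfl | rfl
      · exact hx3'
      · exact hx4'
    rw [hUval, this, Finset.sum_const, nsmul_eq_mul] at hfeasU
    have : (2 : ℝ) ≤ (({e₃, e₄} : Finset E).filter (Crosses a b U)).card := by linarith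
    exact_mod_cast this
  have hFeq : ({e₃, e₄} : Finset E).filter (Crosses a b U) = {e₃, e₄} :=
    Finset.eq_of_subset_of_card_le (Finset.filter_subset _ _)
      (Finset.card_le_two.trans hcardF)
  have h34 : e₃ ≠ e₄ := by
    rintro rfl
    rw [hFeq] at hcardF
    simp at hcardF
  have hc3 : Crosses a b U e₃ := by
    have : e₃ ∈ ({e₃, e₄} : Finset E).filter (Crosses a b U) := by rw [hFeq]; simp
    exact (mem_filter.1 this).2
  have hc4 : Crosses a b U e₄ := by
    have : e₄ ∈ ({e₃, e₄} : Finset E).filter (Crosses a b U) := by rw [hFeq]; simp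
    exact (mem_filter.1 this).2
  have htight : cutVal a b x U = 1 := by
    rw [hUval, hFeq, Finset.sum_pair h34, hx3', hx4']; norm_num
  have hU3 : U.card = 3 := by
    simp only [U]
    rw [Finset.card_insert_of_notMem (by simp [Ne.symm hpv, Ne.symm hqv]),
      Finset.card_pair hpq]
  have hUc : Uᶜ.card ≤ 1 := by
    rcases htriv U hUT htight with h | h
    · omega
    · exact h
  obtain ⟨z, hzp, hj3, _, _⟩ := hJoin p e₃ (by rw [hDp]; simp)
  obtain ⟨z', hzq, hj4, _, _⟩ := hJoin q e₄ (by rw [hDq]; simp)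
  have hzU : z ∉ U := by
    intro h; rw [hj3.crosses] at hc3; simp [U] at hc3 h; tauto
  have hzU' : z' ∉ U := by
    intro h; rw [hj4.crosses] at hc4; simp [U] at hc4 h; tauto
  have hzz : z = z' := Finset.card_le_one.1 hUc z (by simpa using hzU) z' (by simpa using hzU')
  subst hzz
  have h14 : e₁ ≠ e₄ := by
    rintro rfl; rw [hj1.crosses] at hc4; simp [U] at hc4
  refine ⟨Pi.single e₁ 1 + Pi.single e₂ (-1) + (Pi.single e₃ (-1) + Pi.single e₄ 1), ?_, ?_, ?_⟩
  · intro h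
    have := congrFun h e₁
    simp [Pi.single_eq_of_ne h12, Pi.single_eq_of_ne h31.symm, Pi.single_eq_of_ne h14] at this
  · intro e he
    have h1 : e ≠ e₁ := by rintro rfl; exact hx1 he
    have h2 : e ≠ e₂ := by rintro rfl; exact hx2 he
    have h3 : e ≠ e₃ := by rintro rfl; exact hx3 he
    have h4 : e ≠ e₄ := by rintro rfl; exact hx4 he
    simp [Pi.single_eq_of_ne h1, Pi.single_eq_of_ne h2, Pi.single_eq_of_ne h3,
      Pi.single_eq_of_ne h4]
  · intro r _
    simp only [cutVal_add, cutVal_single, hj1.crosses, hj2.crosses, hj3.crosses, hj4.crosses,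
      mem_singleton]
    simp only [U, mem_insert, mem_singleton, not_or] at hzU
    by_cases r1 : v = r
    · subst r1
      simp [hpv, hqv, hzU.1]
    by_cases r2 : p = r
    · subst r2
      simp [Ne.symm hpv, Ne.symm hpq, hzU.2.1]
    by_cases r3 : q = r
    · subst r3
      simp [Ne.symm hqv, hpq, hzU.2.2]
    by_cases r4 : z = r <;> simp [r1, r2, r3, r4]

/-- The Edmonds–Johnson theorem: a nonnegative vector whose value on every `T`-cut is at least `1`
dominates a convex combination of `T`-joins. -/
theorem tDominated_of_tFeasible [Fintype E] : ∀ (n : ℕ) (V : Type u) [Fintype V],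
    Fintype.card V = n → ∀ (a b : E → V) (T : V → ZMod 2) (x : E → ℝ),
    TFeasible a b T x → TDominated a b T x := by
  intro n
  induction n using Nat.strong_induction_on with
  | _ n ihn =>
  intro V _ hV a b T
  have hcol : ∀ (x : E → ℝ) (U : Finset V), TFeasible a b T x → 2 ≤ U.card →
      TDominated (collapse U ∘ a) (collapse U ∘ b) (pushT (collapse U) T) x := by
    intro x U hx hU
    have := card_collapse U
    exact ihn (Fintype.card (Option {v // v ∉ U})) (by omega) _ rfl _ _ _ _ (hx.comp _)
  -- slacks of all constraints at `x`, and their rates of change in direction `d`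
  let slack : (E → ℝ) → (E ⊕ {U : Finset V // ∑ v ∈ U, T v = 1}) → ℝ := fun x =>
    Sum.elim x (fun U => cutVal a b x U.1 - 1)
  let slope : (E → ℝ) → (E ⊕ {U : Finset V // ∑ v ∈ U, T v = 1}) → ℝ := fun d =>
    Sum.elim d (fun U => cutVal a b d U.1)
  have hslack : ∀ (x d : E → ℝ) (ε : ℝ) i, slack (x + ε • d) i = slack x i + ε * slope d i := by
    intro x d ε i
    rcases i with e | U
    · simp [slack, slope]
    · simp only [slack, slope, Sum.elim_inr, cutVal_add, cutVal_smul]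
      ring
  have hfeas : ∀ x, TFeasible a b T x ↔ ∀ i, 0 ≤ slack x i := by
    intro x
    constructor
    · rintro ⟨h1, h2⟩ (e | ⟨U, hU⟩)
      · exact h1 e
      · exact sub_nonneg.2 (h2 U hU)
    · intro h
      exact ⟨fun e => h (Sum.inl e), fun U hU => sub_nonneg.1 (h (Sum.inr ⟨U, hU⟩))⟩
  suffices H : ∀ (k : ℕ) (x : E → ℝ), (univ.filter fun i => slack x i ≠ 0).card = k →
      TFeasible a b T x → TDominated a b T x from fun x hx => H _ x rfl hx
  intro k
  induction k using Nat.strong_induction_on with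
  | _ k ihk =>
  intro x hk hx
  have hmove : ∀ d : E → ℝ, (∀ i, slack x i = 0 → slope d i = 0) → (∃ i, slope d i < 0) →
      ∃ ε : ℝ, 0 < ε ∧ TDominated a b T (x + ε • d) := by
    intro d h0 hneg
    obtain ⟨ε, hε, h1, h2⟩ := exists_step (slack x) (slope d) ((hfeas x).1 hx) h0 hneg
    refine ⟨ε, hε, ihk _ (hk ▸ h2) _ ?_ ?_⟩
    · simp only [hslack]
    · rw [hfeas]; intro i; rw [hslack]; exact h1 i
  by_cases hT : ∀ v, T v = 0
  · refine tDominated_of_index (ι := Unit) (fun _ => 1) (fun _ => ∅) (by simp) ?_ (by simp) ?_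
    · intro _ _ v
      simp [bdry, hT]
    · intro e
      simpa using hx.1 e
  -- odd total parity would make `univ` a violated `T`-cut
  have hTeven : ∑ v, T v = 0 := by
    by_contra hne
    have h1 : ∑ v, T v = 1 := by
      generalize ∑ v, T v = p at hne
      revert p; decide
    have := hx.2 univ h1
    simp [cutVal, Crosses] at this
    linarith
  have hTcompl : ∀ U : Finset V, ∑ v ∈ U, T v = 1 → ∑ v ∈ Uᶜ, T v = 1 := by
    intro U hU
    have h := Finset.sum_add_sum_compl U T
    rw [hTeven, hU] at h
    generalize ∑ v ∈ Uᶜ, T v = p at h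
    revert p; decide
  by_cases hbig : ∃ e, a e ≠ b e ∧ 1 ≤ x e
  · obtain ⟨e, hab, he⟩ := hbig
    exact tDominated_of_one_le hab he (hcol x _ hx (by rw [Finset.card_pair hab]))
  push Not at hbig
  by_cases hcov : ∃ e, x e ≠ 0 ∧ ∀ U : Finset V, ∑ v ∈ U, T v = 1 → cutVal a b x U = 1 →
      ¬ Crosses a b U e
  · obtain ⟨e, he, hU⟩ := hcov
    obtain ⟨ε, hε, h⟩ := hmove (Pi.single e (-1)) (by
      rintro (f | ⟨U, hUT⟩) hf
      · have : f ≠ e := by rintro rfl; exact he hf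
        simp [slope, Pi.single_eq_of_ne this]
      · have : cutVal a b x U = 1 := sub_eq_zero.1 hf
        simp only [slope, Sum.elim_inr, cutVal_single, hU U hUT this, if_false])
      ⟨Sum.inl e, by simp [slope]⟩
    refine h.mono fun f => ?_
    have : (Pi.single e (-1) : E → ℝ) f ≤ 0 := by
      by_cases hf : f = e
      · subst hf; simp
      · simp [Pi.single_eq_of_ne hf]
    have := mul_nonpos_of_nonneg_of_nonpos hε.le this
    simp only [Pi.add_apply, Pi.smul_apply, smul_eq_mul]
    linarith
  push Not at hcov
  by_cases htriv : ∃ U : Finset V, ∑ v ∈ U, T v = 1 ∧ cutVal a b x U = 1 ∧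
      2 ≤ U.card ∧ 2 ≤ Uᶜ.card
  · obtain ⟨U, hU, ht, h1, h2⟩ := htriv
    exact tDominated_of_tight hx.1 hU (hTcompl U hU) ht (hcol x U hx h1) (hcol x Uᶜ hx h2)
  have htriv' : ∀ U : Finset V, ∑ v ∈ U, T v = 1 → cutVal a b x U = 1 →
      U.card ≤ 1 ∨ Uᶜ.card ≤ 1 := by
    intro U hU ht
    by_contra hc
    exact htriv ⟨U, hU, ht, by omega, by omega⟩
  have hloop : ∀ e, x e ≠ 0 → a e ≠ b e := by
    intro e he hab
    obtain ⟨U, _, _, hc⟩ := hcov e he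
    simp [Crosses, hab] at hc
  have hlt : ∀ e, x e < 1 := by
    intro e
    by_cases he : x e = 0
    · rw [he]; norm_num
    · exact hbig e (hloop e he)
  -- from here on the tight `T`-cuts are the stars of the vertices in `A`
  let A : Finset V := univ.filter fun v => T v = 1 ∧ cutVal a b x {v} = 1
  have hAT : ∀ v ∈ A, T v = 1 := fun v hv => (mem_filter.1 hv).2.1
  have hA1 : ∀ v ∈ A, cutVal a b x {v} = 1 := fun v hv => (mem_filter.1 hv).2.2
  have hne : ∃ e, x e ≠ 0 := by
    by_contra hc
    push Not at hc
    push Not at hT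
    obtain ⟨v, hv⟩ := hT
    have hv1 : T v = 1 := by
      generalize T v = p at hv
      revert p; decide
    have := hx.2 {v} (by simpa using hv1)
    simp [cutVal, hc] at this
    linarith
  obtain ⟨d, hd0, hdx, hdA⟩ : ∃ d : E → ℝ, d ≠ 0 ∧ (∀ e, x e = 0 → d e = 0) ∧
      ∀ v ∈ A, cutVal a b d {v} = 0 := by
    by_cases hc : A.card < (univ.filter fun e => x e ≠ 0).card
    · exact exists_kernel_of_card_lt a b x A hc
    · exact exists_kernel_of_card_le a b T x hx A hne hlt hAT hA1 htriv' (by omega)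
  have hsing : ∀ U : Finset V, ∑ v ∈ U, T v = 1 → cutVal a b x U = 1 → U.card ≤ 1 →
      cutVal a b d U = 0 := by
    intro U hU ht hc
    rcases (by omega : U.card = 0 ∨ U.card = 1) with h | h
    · rw [Finset.card_eq_zero.1 h] at hU; simp at hU
    · obtain ⟨v, rfl⟩ := Finset.card_eq_one.1 h
      exact hdA v (by simp only [A, mem_filter, mem_univ, true_and]; exact ⟨by simpa using hU, ht⟩)
  have hdtight : ∀ U : Finset V, ∑ v ∈ U, T v = 1 → cutVal a b x U = 1 →
      cutVal a b d U = 0 := by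
    intro U hU ht
    rcases htriv' U hU ht with h | h
    · exact hsing U hU ht h
    · rw [← cutVal_compl]
      exact hsing Uᶜ (hTcompl U hU) (by rw [cutVal_compl, ht]) h
  have hdslope : ∀ i, slack x i = 0 → slope d i = 0 := by
    rintro (e | ⟨U, hU⟩) hi
    · exact hdx e hi
    · exact hdtight U hU (sub_eq_zero.1 hi)
  -- a one-signed kernel vector would change the value of a tight cut
  have hsign : ∀ d' : E → ℝ, d' ≠ 0 → (∀ e, x e = 0 → d' e = 0) →
      (∀ U : Finset V, ∑ v ∈ U, T v = 1 → cutVal a b x U = 1 → cutVal a b d' U = 0) →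
      ∃ e, d' e < 0 := by
    intro d' h0 hx' ht
    by_contra hc
    push Not at hc
    obtain ⟨e, he⟩ := Function.ne_iff.1 h0
    obtain ⟨U, hU, hUt, hUc⟩ := hcov e (fun h => he (hx' e h))
    have h1 := ht U hU hUt
    rw [cutVal_eq_sum_filter, Finset.sum_eq_zero_iff_of_nonneg (fun f _ => hc f)] at h1
    exact he (h1 e (by simpa using hUc))
  have hneg : ∀ U : Finset V, cutVal a b (-d) U = - cutVal a b d U := by
    intro U
    have := cutVal_smul a b (-1) d U
    simpa using this
  obtain ⟨e₁, he₁⟩ := hsign d hd0 hdx hdtight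
  obtain ⟨e₂, he₂⟩ := hsign (-d) (neg_ne_zero.2 hd0) (by intro e he; simp [hdx e he])
    (by intro U hU ht; rw [hneg, hdtight U hU ht, neg_zero])
  obtain ⟨ε, hε, h₁⟩ := hmove d hdslope ⟨Sum.inl e₁, he₁⟩
  obtain ⟨η, hη, h₂⟩ := hmove (-d) (by
    rintro (e | ⟨U, hU⟩) hi
    · have := hdslope _ hi
      simp only [slope, Sum.elim_inl] at this
      simp [slope, this]
    · have := hdslope _ hi
      simp only [slope, Sum.elim_inr] at this
      simp [slope, hneg, this]) ⟨Sum.inl e₂, he₂⟩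
  refine h₁.convex h₂ (p := η / (ε + η)) (q := ε / (ε + η)) (by positivity) (by positivity)
    (by field_simp; ring) fun e => le_of_eq ?_
  simp only [Pi.add_apply, Pi.smul_apply, Pi.neg_apply, smul_eq_mul]
  field_simp
  ring

end kernel

/-! ### Cheap connected spanning edge sets -/

section trees
variable {E : Type v}

/-- `S` connects all of `V`, expressed by cuts: every proper cut contains an edge of `S`. -/
def ConnSet {V : Type u} [Fintype V] (a b : E → V) (S : Finset E) : Prop :=
  ∀ U : Finset V, U.Nonempty → U ≠ univ → ∃ e ∈ S, Crosses a b U e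

lemma collapse_surjective {V : Type u} {U : Finset V} (hU : U.Nonempty) :
    Function.Surjective (collapse U) := by
  rintro (_ | w)
  · obtain ⟨u, hu⟩ := hU
    exact ⟨u, by simp [collapse, hu]⟩
  · exact ⟨w.1, (collapse_eq_some U _ w).2 rfl⟩

lemma collapse_eq_iff {V : Type u} {U : Finset V} {v w : V} (h : collapse U v = collapse U w) :
    v = w ∨ (v ∈ U ∧ w ∈ U) := by
  unfold collapse at h
  split_ifs at h with h1 h2 h2
  · exact Or.inr ⟨h1, h2⟩
  · left; simpa using h

lemma ConnSet.insert_of_collapse {V : Type u} [Fintype V] {a b : E → V} {S : Finset E} {e : E}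
    (h : ConnSet (collapse {a e, b e} ∘ a) (collapse {a e, b e} ∘ b) S) :
    ConnSet a b (insert e S) := by
  intro U hU hU'
  by_cases hc : Crosses a b U e
  · exact ⟨e, by simp, hc⟩
  · have hsat : ∀ v w, collapse {a e, b e} v = collapse {a e, b e} w → v ∈ U → w ∈ U := by
      intro v w hvw hv
      rcases collapse_eq_iff hvw with rfl | ⟨h1, h2⟩
      · exact hv
      · simp only [Crosses, not_not] at hc
        simp only [mem_insert, mem_singleton] at h1 h2
        rcases h1 with rfl | rfl <;> rcases h2 with rfl | rfl <;> tauto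
    have hpre : ∀ v, collapse {a e, b e} v ∈ U.image (collapse {a e, b e}) ↔ v ∈ U := by
      intro v
      simp only [mem_image]
      constructor
      · rintro ⟨w, hw, hwv⟩
        exact hsat w v hwv hw
      · intro hv
        exact ⟨v, hv, rfl⟩
    obtain ⟨f, hf, hfc⟩ := h (U.image (collapse {a e, b e})) (hU.image _) (by
      intro hh
      apply hU'
      ext v
      rw [← hpre, hh]
      simp)
    exact ⟨f, by simp [hf], by simpa only [Crosses, Function.comp_apply, hpre] using hfc⟩

/-- A nonnegative vector satisfying the partition inequalities costs at least as much as some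
connected spanning edge set. A cheapest non-loop `e₀` is contracted, and the induction runs on the
costs lowered by `c e₀` (the truncation at `0` only matters for loops). The bound on
`S.card` accounts for the lowering; a partition of `V` is given by a surjection onto its set of classes. -/
theorem exists_tree [Fintype E] : ∀ (n : ℕ) (V : Type u) [Fintype V] [Nonempty V],
    Fintype.card V = n → ∀ (a b : E → V) (x : E → ℝ), (∀ e, 0 ≤ x e) →
    (∀ (K : Type u) [Fintype K] (f : V → K), Function.Surjective f →
      (Fintype.card K : ℝ) - 1 ≤ ∑ e, if f (a e) ≠ f (b e) then x e else 0) →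
    ∀ c : E → ℝ, (∀ e, 0 ≤ c e) →
    ∃ S : Finset E, ConnSet a b S ∧ S.card + 1 ≤ n ∧ ∑ e ∈ S, c e ≤ ∑ e, c e * x e := by
  intro n
  induction n with
  | zero =>
    intro V _ _ hV
    exact absurd hV Fintype.card_ne_zero
  | succ n ih =>
  intro V _ _ hV a b x hx hpart c hc
  rcases Nat.eq_zero_or_pos n with rfl | hn
  · refine ⟨∅, ?_, by simp, ?_⟩
    · intro U hU hU'
      exfalso
      apply hU'
      have : Subsingleton V := Fintype.card_le_one_iff_subsingleton.1 (by omega)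
      obtain ⟨u, hu⟩ := hU
      ext v
      simp [Subsingleton.elim v u, hu]
    · simpa using Finset.sum_nonneg fun e _ => mul_nonneg (hc e) (hx e)
  · have hid := hpart V id Function.surjective_id
    rw [hV] at hid
    push_cast at hid
    simp only [id] at hid
    have hn' : (1 : ℝ) ≤ n := by exact_mod_cast hn
    have hne : (univ.filter fun e => a e ≠ b e).Nonempty := by
      rw [Finset.nonempty_iff_ne_empty]
      intro h
      rw [← Finset.sum_filter, h, Finset.sum_empty] at hid
      linarith
    obtain ⟨e₀, he₀, hmin⟩ := Finset.exists_min_image _ c hne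
    simp only [mem_filter, mem_univ, true_and] at he₀ hmin
    have hcard := card_collapse ({a e₀, b e₀} : Finset V)
    rw [Finset.card_pair he₀] at hcard
    obtain ⟨S, hS, hSc, hSw⟩ := ih (Option {v // v ∉ ({a e₀, b e₀} : Finset V)}) (by omega)
      (collapse {a e₀, b e₀} ∘ a) (collapse {a e₀, b e₀} ∘ b) x hx
      (by
        intro K _ f hf
        exact hpart K (f ∘ collapse {a e₀, b e₀}) (hf.comp (collapse_surjective (by simp))))
      (fun e => max (c e - c e₀) 0) (fun e => le_max_right _ _)
    refine ⟨insert e₀ S, hS.insert_of_collapse, ?_, ?_⟩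
    · have := Finset.card_insert_le e₀ S
      omega
    · have h1 : ∑ e ∈ insert e₀ S, c e ≤ c e₀ + ∑ e ∈ S, c e := by
        by_cases h : e₀ ∈ S
        · rw [Finset.insert_eq_of_mem h]; linarith [hc e₀]
        · rw [Finset.sum_insert h]
      have h2 : ∑ e ∈ S, c e ≤ ∑ e ∈ S, (max (c e - c e₀) 0 + c e₀) :=
        Finset.sum_le_sum fun e _ => by linarith [le_max_left (c e - c e₀) 0]
      rw [Finset.sum_add_distrib, Finset.sum_const, nsmul_eq_mul] at h2
      have h3 : ((S.card : ℝ) + 1) * c e₀ ≤ n * c e₀ :=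
        mul_le_mul_of_nonneg_right (by exact_mod_cast hSc) (hc e₀)
      have h4 : (n : ℝ) * c e₀ ≤ (∑ e, if a e ≠ b e then x e else 0) * c e₀ :=
        mul_le_mul_of_nonneg_right (by linarith) (hc e₀)
      have h5 : ∑ e, (max (c e - c e₀) 0 * x e) + (∑ e, if a e ≠ b e then x e else 0) * c e₀
          ≤ ∑ e, c e * x e := by
        rw [Finset.sum_mul, ← Finset.sum_add_distrib]
        refine Finset.sum_le_sum fun e _ => ?_
        by_cases hab : a e = b e
        · have : max (c e - c e₀) 0 ≤ c e := max_le (by linarith [hc e₀]) (hc e)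
          simpa [hab] using mul_le_mul_of_nonneg_right this (hx e)
        · rw [max_eq_left (by linarith [hmin e hab]), if_pos hab]
          apply le_of_eq
          ring
      linarith

end trees

/-! ### Cheap tours -/

section final
variable {V : Type u}

lemma isDiag_iff_ends {a b : Sym2 V → V} (hab : ∀ e, e = s(a e, b e)) (e : Sym2 V) :
    e.IsDiag ↔ a e = b e := by
  conv_lhs => rw [hab e]
  simp

lemma card_inter_pair {s t : V} (hst : s ≠ t) (U : Finset V) :
    (U ∩ {s, t}).card = (if s ∈ U then 1 else 0) + (if t ∈ U then 1 else 0) := by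
  rw [Finset.inter_comm, ← Finset.filter_mem_eq_inter, Finset.card_filter, Finset.sum_pair hst]

variable [Fintype V]

lemma mem_cutEdges_iff {a b : Sym2 V → V} (hab : ∀ e, e = s(a e, b e)) (U : Finset V)
    (e : Sym2 V) : e ∈ cutEdges U ↔ Crosses a b U e := by
  unfold cutEdges Crosses
  rw [mem_filter]
  constructor
  · rintro ⟨_, u, v, h, hu, hv⟩
    rw [hab e, Sym2.eq_iff] at h
    rcases h with ⟨h1, h2⟩ | ⟨h1, h2⟩ <;> rw [h1, h2] <;> tauto
  · intro h
    refine ⟨mem_univ _, ?_⟩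
    by_cases h1 : a e ∈ U
    · exact ⟨a e, b e, hab e, h1, by tauto⟩
    · exact ⟨b e, a e, (hab e).trans Sym2.eq_swap, by tauto, h1⟩

/-- The vector `x` with its values on the diagonal of `Sym2 V`, which are not edges, set to `0`. -/
def nonLoopPart (x : Sym2 V → ℝ) (e : Sym2 V) : ℝ := if e.IsDiag then 0 else x e

lemma cutVal_nonLoopPart {a b : Sym2 V → V} (hab : ∀ e, e = s(a e, b e)) (x : Sym2 V → ℝ)
    (U : Finset V) : cutVal a b (nonLoopPart x) U = ∑ e ∈ cutEdges U, x e := by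
  have : cutEdges U = univ.filter (Crosses a b U) := by
    ext e; simp [mem_cutEdges_iff hab]
  rw [this, cutVal_eq_sum_filter]
  refine Finset.sum_congr rfl fun e he => ?_
  have : ¬ e.IsDiag := by
    rw [isDiag_iff_ends hab]
    intro h
    simp [Crosses, h] at he
  simp [nonLoopPart, this]

/-- The LP constraints of the classes of a partition sum to twice the partition inequality. -/
lemma partition_ineq {a b : Sym2 V → V} (hab : ∀ e, e = s(a e, b e)) {s t : V} (hst : s ≠ t)
    {x : Sym2 V → ℝ} (hx : SubtourLP s t x) (K : Type u) [Fintype K] (f : V → K)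
    (hf : Function.Surjective f) :
    (Fintype.card K : ℝ) - 1 ≤ ∑ e, if f (a e) ≠ f (b e) then nonLoopPart x e else 0 := by
  have hnn : ∀ e, 0 ≤ nonLoopPart x e := fun e => by
    unfold nonLoopPart; split_ifs; exacts [le_rfl, hx.1 e]
  by_cases hK : Fintype.card K ≤ 1
  · have h1 : (Fintype.card K : ℝ) ≤ 1 := by exact_mod_cast hK
    have h2 : 0 ≤ ∑ e, if f (a e) ≠ f (b e) then nonLoopPart x e else 0 :=
      Finset.sum_nonneg fun e _ => by split_ifs; exacts [hnn e, le_rfl]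
    linarith
  have hcut : ∀ k, (2 : ℝ) - (if f s = k then 1 else 0) - (if f t = k then 1 else 0)
      ≤ cutVal a b (nonLoopPart x) (univ.filter fun v => f v = k) := by
    intro k
    rw [cutVal_nonLoopPart hab]
    refine le_trans ?_ (hx.2.2 _ ?_ ?_)
    · unfold lpBound
      rw [card_inter_pair hst]
      simp only [mem_filter, mem_univ, true_and]
      by_cases h1 : f s = k <;> by_cases h2 : f t = k <;> simp [h1, h2] <;> norm_num
    · obtain ⟨v, hv⟩ := hf k
      exact ⟨v, by simp [hv]⟩
    · intro h
      apply hK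
      rw [Fintype.card_le_one_iff]
      have : ∀ k', k' = k := by
        intro k'
        obtain ⟨v, rfl⟩ := hf k'
        have : v ∈ univ.filter fun v => f v = k := by rw [h]; simp
        simpa using this
      intro p q
      rw [this p, this q]
  have hsum : ∑ k, cutVal a b (nonLoopPart x) (univ.filter fun v => f v = k)
      = 2 * ∑ e, if f (a e) ≠ f (b e) then nonLoopPart x e else 0 := by
    unfold cutVal
    rw [Finset.sum_comm, Finset.mul_sum]
    refine Finset.sum_congr rfl fun e _ => ?_
    simp only [Crosses, mem_filter, mem_univ, true_and]
    by_cases h : f (a e) = f (b e)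
    · simp [h]
    · have : ∀ k, (if ¬ (f (a e) = k ↔ f (b e) = k) then nonLoopPart x e else 0) =
          (if f (a e) = k then nonLoopPart x e else 0) + (if f (b e) = k then nonLoopPart x e else 0) := by
        intro k
        by_cases h1 : f (a e) = k
        · have h2 : f (b e) ≠ k := fun h2 => h (h1.trans h2.symm)
          simp [h1, h2]
        · by_cases h2 : f (b e) = k <;> simp [h1, h2]
      simp only [this, Finset.sum_add_distrib, Finset.sum_ite_eq, mem_univ, if_true]
      simp [h]
      ring
  have := Finset.sum_le_sum fun k (_ : k ∈ (univ : Finset K)) => hcut k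
  rw [hsum, Finset.sum_sub_distrib, Finset.sum_sub_distrib] at this
  simp at this
  simp only [ne_eq, ite_not] at this ⊢
  linarith

/-- The multiset union `S + J`, without loops. -/
def unionMult (S J : Finset (Sym2 V)) (e : Sym2 V) : ℕ :=
  if e.IsDiag then 0 else (if e ∈ S then 1 else 0) + (if e ∈ J then 1 else 0)

lemma edgeDegree_unionMult {a b : Sym2 V → V} (hab : ∀ e, e = s(a e, b e))
    (S J : Finset (Sym2 V)) (v : V) :
    (edgeDegree (unionMult S J) v : ZMod 2) = bdry a b S v + bdry a b J v := by
  have hb : ∀ K : Finset (Sym2 V), bdry a b K v = ∑ e, if e ∈ K then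
      (((if a e = v then 1 else 0) + (if b e = v then 1 else 0)) : ZMod 2) else 0 := by
    intro K
    unfold bdry
    rw [← Finset.sum_filter]
    congr 1
    ext; simp
  rw [hb, hb, ← Finset.sum_add_distrib, edgeDegree, Finset.sum_filter]
  push_cast
  refine Finset.sum_congr rfl fun e _ => ?_
  have hmem : v ∈ e ↔ (a e = v ∨ b e = v) := by
    conv_lhs => rw [hab e]
    rw [Sym2.mem_iff]
    tauto
  have h2 : (1 + 1 : ZMod 2) = 0 := by decide
  by_cases hd : a e = b e
  · have : unionMult S J e = 0 := by simp [unionMult, (isDiag_iff_ends hab e).2 hd]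
    rw [this, hd]
    by_cases h : b e = v <;> simp [h, h2]
  · have hd' : ¬ e.IsDiag := fun h => hd ((isDiag_iff_ends hab e).1 h)
    by_cases h1 : a e = v
    · have h3 : b e ≠ v := fun h3 => hd (h1.trans h3.symm)
      by_cases hS : e ∈ S <;> by_cases hJ : e ∈ J <;>
        simp [hmem, h1, h3, unionMult, hd', hS, hJ] <;> rfl
    · by_cases h3 : b e = v <;> by_cases hS : e ∈ S <;> by_cases hJ : e ∈ J <;>
        simp [hmem, h1, h3, unionMult, hd', hS, hJ] <;> rfl

lemma connected_of_connSet [Nonempty V] {a b : Sym2 V → V} (hab : ∀ e, e = s(a e, b e))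
    {S : Finset (Sym2 V)} (hS : ConnSet a b S) (m : Sym2 V → ℕ)
    (hm : ∀ e ∈ S, ¬ e.IsDiag → m e ≠ 0) :
    (SimpleGraph.fromEdgeSet {e : Sym2 V | m e ≠ 0}).Connected := by
  set G := SimpleGraph.fromEdgeSet {e : Sym2 V | m e ≠ 0} with hG
  have hpre : G.Preconnected := by
    intro r w
    by_contra hrw
    obtain ⟨e, heS, hc⟩ := hS (univ.filter fun v => G.Reachable r v)
      ⟨r, by simp⟩ (by
        intro h
        apply hrw
        have : w ∈ univ.filter fun v => G.Reachable r v := by rw [h]; simp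
        simpa using this)
    obtain ⟨p, hp, q, hq, hj⟩ := exists_joins_of_crosses hc
    simp only [mem_filter, mem_univ, true_and] at hp hq
    have hpq : p ≠ q := by rintro rfl; exact hq hp
    have hepq : e = s(p, q) := by
      rw [hab e]
      rcases hj with ⟨h1, h2⟩ | ⟨h1, h2⟩
      · rw [h1, h2]
      · rw [h1, h2, Sym2.eq_swap]
    apply hq
    refine hp.trans (SimpleGraph.Adj.reachable ?_)
    rw [hG, SimpleGraph.fromEdgeSet_adj]
    refine ⟨?_, hpq⟩
    rw [← hepq]
    exact hm e heS (by rw [hepq]; simpa using hpq)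
  exact ⟨hpre⟩

/-- Every narrow cut is `δ(s)` or `δ(t)`, since the edge `st` lies in all narrow cuts and these
two are narrow. If `δ(s) = δ(t)`, then `V = {s, t}` and there is only one `s`–`t` cut. -/
lemma narrow_eq {s t : V} (hst : s ≠ t) {x : Sym2 V → ℝ} (hx : SubtourLP s t x)
    (htwo : ∀ e : Sym2 V, ¬ e.IsDiag →
      (Finset.univ.filter fun Q : Finset (Sym2 V) =>
        IsNarrowCut s t x Q ∧ e ∈ Q).card ≤ 2)
    {U : Finset V} (hU : (U ∩ {s, t}).card = 1) (hlt : ∑ e ∈ cutEdges U, x e < 2) :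
    cutEdges U = cutEdges {s} ∨ cutEdges U = cutEdges {t} := by
  have hmemst : ∀ W : Finset V, (W ∩ {s, t}).card = 1 → s(s, t) ∈ cutEdges W := by
    intro W hW
    rw [card_inter_pair hst] at hW
    simp only [cutEdges, mem_filter, mem_univ, true_and]
    by_cases h1 : s ∈ W <;> by_cases h2 : t ∈ W <;> simp [h1, h2] at hW
    · exact ⟨s, t, rfl, h1, h2⟩
    · exact ⟨t, s, Sym2.eq_swap, h2, h1⟩
  have hs1 : (({s} : Finset V) ∩ {s, t}).card = 1 := by
    rw [card_inter_pair hst]; simp [hst.symm]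
  have ht1 : (({t} : Finset V) ∩ {s, t}).card = 1 := by
    rw [card_inter_pair hst]; simp [hst]
  have hns : IsNarrowCut s t x (cutEdges {s}) := by
    refine ⟨{s}, hs1, rfl, ?_⟩
    rw [hx.2.1 s, lpBound, if_pos hs1]; norm_num
  have hnt : IsNarrowCut s t x (cutEdges {t}) := by
    refine ⟨{t}, ht1, rfl, ?_⟩
    rw [hx.2.1 t, lpBound, if_pos ht1]; norm_num
  have hnU : IsNarrowCut s t x (cutEdges U) := ⟨U, hU, rfl, hlt⟩
  by_cases heq : cutEdges ({s} : Finset V) = cutEdges {t}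
  · have hV : ∀ v, v = s ∨ v = t := by
      intro v
      by_contra hc
      push Not at hc
      have h1 : s(s, v) ∈ cutEdges ({s} : Finset V) := by
        simp only [cutEdges, mem_filter, mem_univ, true_and]
        exact ⟨s, v, rfl, by simp, by simpa using hc.1⟩
      rw [heq] at h1
      simp only [cutEdges, mem_filter, mem_univ, true_and, mem_singleton] at h1
      obtain ⟨p, q, h, hp, hq⟩ := h1
      rw [Sym2.eq_iff] at h
      rcases h with ⟨h1, h2⟩ | ⟨h1, h2⟩
      · exact hst (h1.trans hp)
      · exact hc.2 (h2.trans hp)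
    rw [card_inter_pair hst] at hU
    by_cases h1 : s ∈ U <;> by_cases h2 : t ∈ U <;> simp [h1, h2] at hU
    · left
      congr 1
      ext v
      rcases hV v with rfl | rfl
      · simp [h1]
      · simp [h2, hst.symm]
    · right
      congr 1
      ext v
      rcases hV v with rfl | rfl
      · simp [h1, hst]
      · simp [h2]
  · by_contra hc
    push Not at hc
    have h3 : ({cutEdges U, cutEdges {s}, cutEdges {t}} : Finset (Finset (Sym2 V))) ⊆
        Finset.univ.filter fun Q : Finset (Sym2 V) =>
        IsNarrowCut s t x Q ∧ s(s, t) ∈ Q := by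
      intro Q hQ
      simp only [mem_insert, mem_singleton] at hQ
      simp only [mem_filter, mem_univ, true_and]
      rcases hQ with rfl | rfl | rfl
      · exact ⟨hnU, hmemst _ hU⟩
      · exact ⟨hns, hmemst _ hs1⟩
      · exact ⟨hnt, hmemst _ ht1⟩
    have h4 := (Finset.card_le_card h3).trans (htwo s(s, t) (by simpa using hst))
    rw [Finset.card_insert_of_notMem (by simp [hc.1, hc.2]), Finset.card_pair heq] at h4
    omega

/-- Some join in the combination dominated by `y` costs at most as much as `y`. -/
lemma TDominated.exists_cheap {W : Type u} {E : Type v} [Fintype E] {a b : E → W}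
    {T : W → ZMod 2} {y : E → ℝ} (h : TDominated a b T y) {c : E → ℝ} (hc : ∀ e, 0 ≤ c e) :
    ∃ J, IsTJoin a b T J ∧ ∑ e ∈ J, c e ≤ ∑ e, c e * y e := by
  obtain ⟨w, h1, h2, h3, h4⟩ := h
  have hav : ∑ J, w J * ∑ e ∈ J, c e ≤ ∑ e, c e * y e := by
    have : ∀ J : Finset E, w J * ∑ e ∈ J, c e = ∑ e, c e * (if e ∈ J then w J else 0) := by
      intro J
      rw [Finset.mul_sum]
      simp only [mul_ite, mul_zero]
      rw [← Finset.sum_filter]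
      have : univ.filter (fun e => e ∈ J) = J := by ext; simp
      rw [this]
      exact Finset.sum_congr rfl fun e _ => mul_comm _ _
    simp only [this]
    rw [Finset.sum_comm]
    refine Finset.sum_le_sum fun e _ => ?_
    rw [← Finset.mul_sum]
    exact mul_le_mul_of_nonneg_left (h4 e) (hc e)
  by_contra hno
  push Not at hno
  have hle : ∀ J, w J * ∑ e, c e * y e ≤ w J * ∑ e ∈ J, c e := by
    intro J
    by_cases hJ : w J = 0
    · simp [hJ]
    · exact mul_le_mul_of_nonneg_left (hno J (h2 J hJ)).le (h1 J)
  obtain ⟨J₀, hJ₀⟩ : ∃ J, w J ≠ 0 := by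
    by_contra hz
    push Not at hz
    simp [hz] at h3
  have hlt : ∑ J, w J * ∑ e, c e * y e < ∑ J, w J * ∑ e ∈ J, c e :=
    Finset.sum_lt_sum (fun J _ => hle J) ⟨J₀, mem_univ _,
      mul_lt_mul_of_pos_left (hno J₀ (h2 J₀ hJ₀)) (lt_of_le_of_ne (h1 J₀) (Ne.symm hJ₀))⟩
  rw [← Finset.sum_mul, h3, one_mul] at hlt
  linarith

/-- The Christofides–Wolsey argument: for every nonnegative cost there is a tour of cost at most
`3/2` times that of `x`. -/
lemma exists_cheap_tour {s t : V} (hst : s ≠ t) {x : Sym2 V → ℝ} (hx : SubtourLP s t x)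
    (htwo : ∀ e : Sym2 V, ¬ e.IsDiag →
      (Finset.univ.filter fun Q : Finset (Sym2 V) =>
        IsNarrowCut s t x Q ∧ e ∈ Q).card ≤ 2)
    {c : Sym2 V → ℝ} (hc : ∀ e, 0 ≤ c e) :
    ∃ S J : Finset (Sym2 V), IsSTTour s t (unionMult S J) ∧
      ∑ e, c e * (unionMult S J e : ℝ) ≤ ∑ e, c e * (3 / 2 * nonLoopPart x e) := by
  obtain ⟨a, b, hab⟩ : ∃ a b : Sym2 V → V, ∀ e, e = s(a e, b e) :=
    ⟨fun e => (Quot.out e).1, fun e => (Quot.out e).2, fun e => (Quot.out_eq e).symm⟩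
  have : Nonempty V := ⟨s⟩
  have hnn : ∀ e, 0 ≤ nonLoopPart x e := fun e => by
    unfold nonLoopPart; split_ifs; exacts [le_rfl, hx.1 e]
  set C := ∑ e, c e * nonLoopPart x e with hC
  have hC0 : 0 ≤ C := Finset.sum_nonneg fun e _ => mul_nonneg (hc e) (hnn e)
  have hdeg : ∀ r, r = s ∨ r = t → cutVal a b (nonLoopPart x) {r} = 1 := by
    intro r hr
    rw [cutVal_nonLoopPart hab, hx.2.1 r, lpBound, if_pos]
    rw [card_inter_pair hst]
    rcases hr with rfl | rfl
    · simp [hst.symm]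
    · simp [hst]
  -- The vector `x` pays the penalty exactly twice. So does any connected set with one edge in each
  -- star, and three payments cost `3 (C + 1)`, more than `C + 2 (C + 1)`.
  let c' : Sym2 V → ℝ := fun e => c e + (C + 1) *
    ((if Crosses a b {s} e then 1 else 0) + (if Crosses a b {t} e then 1 else 0))
  obtain ⟨S, hS, -, hSc⟩ := exists_tree (Fintype.card V) V rfl a b (nonLoopPart x) hnn
    (fun K _ f hf => partition_ineq hab hst hx K f hf) c' (by
      intro e
      have := hc e
      simp only [c']
      split_ifs <;> positivity)
  have hR : ∑ e, c' e * nonLoopPart x e = C + (C + 1) * 2 := by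
    have : ∀ e, c' e * nonLoopPart x e = c e * nonLoopPart x e + (C + 1) *
        ((if Crosses a b {s} e then nonLoopPart x e else 0) +
        (if Crosses a b {t} e then nonLoopPart x e else 0)) := by
      intro e
      simp only [c']
      split_ifs <;> ring
    simp only [this]
    rw [Finset.sum_add_distrib, ← Finset.mul_sum, Finset.sum_add_distrib]
    have h1 := hdeg s (Or.inl rfl)
    have h2 := hdeg t (Or.inr rfl)
    unfold cutVal at h1 h2
    rw [h1, h2, ← hC]
    norm_num
  have hL : ∑ e ∈ S, c' e = ∑ e ∈ S, c e + (C + 1) *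
      (((S.filter (Crosses a b {s})).card : ℝ) + (S.filter (Crosses a b {t})).card) := by
    simp only [c']
    rw [Finset.sum_add_distrib, ← Finset.mul_sum, Finset.sum_add_distrib]
    simp
  have hpos : ∀ r q : V, r ≠ q → 1 ≤ (S.filter (Crosses a b {r})).card := by
    intro r q hrq
    obtain ⟨e, he, hce⟩ := hS {r} (by simp) (by
      intro h
      have : q ∈ ({r} : Finset V) := by rw [h]; simp
      exact hrq (mem_singleton.1 this).symm)
    exact Finset.card_pos.2 ⟨e, by simp [he, hce]⟩
  have hps := hpos s t hst
  have hpt := hpos t s hst.symm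
  have hcS0 : 0 ≤ ∑ e ∈ S, c e := Finset.sum_nonneg fun e _ => hc e
  rw [hR, hL] at hSc
  have hsumdeg : (S.filter (Crosses a b {s})).card + (S.filter (Crosses a b {t})).card ≤ 2 := by
    by_contra h
    have : (3 : ℝ) ≤ ((S.filter (Crosses a b {s})).card : ℝ)
        + (S.filter (Crosses a b {t})).card := by
      have : 3 ≤ (S.filter (Crosses a b {s})).card + (S.filter (Crosses a b {t})).card := by
        omega
      exact_mod_cast this
    nlinarith
  have hds : (S.filter (Crosses a b {s})).card = 1 := by omega
  have hdt : (S.filter (Crosses a b {t})).card = 1 := by omega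
  have hScost : ∑ e ∈ S, c e ≤ C := by
    rw [hds, hdt] at hSc
    push_cast at hSc
    linarith
  let T : V → ZMod 2 := fun v =>
    bdry a b S v + ((if v = s then 1 else 0) + (if v = t then 1 else 0))
  have hTfeas : TFeasible a b T ((1 / 2 : ℝ) • nonLoopPart x) := by
    refine ⟨fun e => by
      have := hnn e
      simp only [Pi.smul_apply, smul_eq_mul]
      positivity, fun U hU => ?_⟩
    rw [cutVal_smul, cutVal_nonLoopPart hab]
    have hTU : ((S.filter (Crosses a b U)).card : ZMod 2) + ((if s ∈ U then 1 else 0) +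
        (if t ∈ U then 1 else 0)) = 1 := by
      have h := hU
      simp only [T] at h
      rw [Finset.sum_add_distrib, Finset.sum_add_distrib, sum_bdry] at h
      simpa using h
    have hz : (1 + 1 : ZMod 2) = 0 := by decide
    have hne : U.Nonempty := by
      rw [Finset.nonempty_iff_ne_empty]
      rintro rfl
      have h0 : S.filter (Crosses a b ∅) = ∅ :=
        Finset.filter_false_of_mem fun e _ => by simp [Crosses]
      rw [h0] at hTU
      simp at hTU
    have hnu : U ≠ univ := by
      rintro rfl
      have h0 : S.filter (Crosses a b univ) = ∅ :=
        Finset.filter_false_of_mem fun e _ => by simp [Crosses]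
      rw [h0] at hTU
      simp [hz] at hTU
    have hlp := hx.2.2 U hne hnu
    unfold lpBound at hlp
    split_ifs at hlp with hcard
    · by_contra hlt
      push Not at hlt
      have hnar := narrow_eq hst hx htwo hcard (by linarith)
      -- `S` has one edge in this cut, so `S` already has the correct parity over `U`
      have hone : (S.filter (Crosses a b U)).card = 1 := by
        simp only [← mem_cutEdges_iff hab] at hds hdt ⊢
        rcases hnar with h | h <;> rw [h] <;> assumption
      rw [card_inter_pair hst] at hcard
      have hcast := congrArg (Nat.cast : ℕ → ZMod 2) hcard
      push_cast at hcast
      rw [hone, hcast] at hTU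
      simp [hz] at hTU
    · linarith
  obtain ⟨J, hJ, hJc⟩ :=
    (tDominated_of_tFeasible _ V rfl a b T _ hTfeas).exists_cheap hc
  refine ⟨S, J, ⟨fun e he => by simp [unionMult, he], ?_, ?_⟩, ?_⟩
  · apply connected_of_connSet hab hS
    intro e he hd
    simp [unionMult, hd, he]
  · intro v
    rw [← ZMod.natCast_eq_one_iff_odd, edgeDegree_unionMult hab, hJ v]
    simp only [T]
    have hz : ∀ p q : ZMod 2, p + (p + q) = q := by decide
    rw [hz]
    by_cases h1 : v = s
    · have : v ≠ t := fun h => hst (h1.symm.trans h)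
      simp [h1, hst]
    · by_cases h2 : v = t <;> simp [h1, h2, hst.symm]
  · have h1 : ∑ e, c e * (unionMult S J e : ℝ) ≤ ∑ e ∈ S, c e + ∑ e ∈ J, c e := by
      have : ∀ K : Finset (Sym2 V), ∑ e ∈ K, c e = ∑ e, if e ∈ K then c e else 0 := by
        intro K
        rw [← Finset.sum_filter]
        congr 1
        ext; simp
      rw [this S, this J, ← Finset.sum_add_distrib]
      refine Finset.sum_le_sum fun e _ => ?_
      have := hc e
      unfold unionMult
      by_cases hd : e.IsDiag
      · simp only [hd, if_true]
        split_ifs <;> simp [this]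
      · simp only [hd, if_false]
        apply le_of_eq
        split_ifs <;> simp
        ring
    have h2 : ∑ e, c e * ((1 / 2 : ℝ) • nonLoopPart x) e = 1 / 2 * C := by
      rw [hC, Finset.mul_sum]
      refine Finset.sum_congr rfl fun e _ => ?_
      simp only [Pi.smul_apply, smul_eq_mul]
      ring
    have h3 : ∑ e, c e * (3 / 2 * nonLoopPart x e) = 3 / 2 * C := by
      rw [hC, Finset.mul_sum]
      exact Finset.sum_congr rfl fun e _ => by ring
    rw [h2] at hJc
    rw [h3]
    linarith

/-! ### From cheap tours to convex combinations -/

/-- The set of `{s,t}`-tours, as real vectors. -/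
def tourSet (s t : V) : Set (Sym2 V → ℝ) :=
  {y | ∃ m : Sym2 V → ℕ, IsSTTour s t m ∧ y = fun e => (m e : ℝ)}

lemma isSTTour_add_double {s t : V} {m : Sym2 V → ℕ} (hm : IsSTTour s t m) {e : Sym2 V}
    (he : ¬ e.IsDiag) (k : ℕ) : IsSTTour s t (m + Pi.single e (2 * k)) := by
  refine ⟨?_, ?_, ?_⟩
  · intro f hf
    have : f ≠ e := by rintro rfl; exact he hf
    simp [hm.1 f hf, Pi.single_eq_of_ne this]
  · refine hm.2.1.mono (SimpleGraph.fromEdgeSet_mono ?_)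
    intro f hf
    simp only [Set.mem_ofPred_eq, Pi.add_apply] at hf ⊢
    omega
  · intro v
    rw [← hm.2.2 v]
    have : edgeDegree (m + Pi.single e (2 * k)) v
        = edgeDegree m v + 2 * (if v ∈ e then k else 0) := by
      unfold edgeDegree
      simp only [Pi.add_apply]
      rw [Finset.sum_add_distrib]
      congr 1
      rw [Finset.sum_filter]
      rw [Finset.sum_eq_single e]
      · by_cases h : v ∈ e <;> simp [h]
      · intro f _ hf; simp [Pi.single_eq_of_ne hf]
      · simp
    have heven : Even (2 * (if v ∈ e then k else 0)) := even_two_mul _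
    rw [this, Nat.odd_add]
    tauto

/-- With `2 k > r`, the vector `y + r e` lies on the segment from `y` to `y + 2 k e`. -/
lemma convexHull_tourSet_add_single {s t : V} {y : Sym2 V → ℝ}
    (hy : y ∈ convexHull ℝ (tourSet s t)) {e : Sym2 V} (he : ¬ e.IsDiag) {r : ℝ} (hr : 0 ≤ r) :
    y + Pi.single e r ∈ convexHull ℝ (tourSet s t) := by
  obtain ⟨k, hk⟩ := exists_nat_gt r
  have hk0 : (0 : ℝ) < k := lt_of_le_of_lt hr hk
  have h1 : ∀ y ∈ convexHull ℝ (tourSet s t),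
      y + Pi.single e (2 * k : ℝ) ∈ convexHull ℝ (tourSet s t) := by
    have hsub : convexHull ℝ (tourSet s t) ⊆
        (fun y => y + Pi.single e (2 * k : ℝ)) ⁻¹' convexHull ℝ (tourSet s t) := by
      apply convexHull_min
      · rintro _ ⟨m, hm, rfl⟩
        apply subset_convexHull
        refine ⟨_, isSTTour_add_double hm he k, ?_⟩
        funext f
        by_cases hf : f = e
        · subst hf; simp
        · simp [Pi.single_eq_of_ne hf]
      · exact (convex_convexHull ℝ _).translate_preimage_left _
    exact fun y hy => hsub hy
  have h2 := (convex_convexHull ℝ (tourSet s t)) hy (h1 y hy)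
    (a := 1 - r / (2 * k)) (b := r / (2 * k))
    (by rw [sub_nonneg, div_le_one (by positivity)]; linarith) (by positivity) (by ring)
  convert h2 using 1
  funext f
  by_cases hf : f = e
  · subst hf
    simp
    field_simp
    ring
  · simp [Pi.single_eq_of_ne hf]
    ring

lemma convexHull_tourSet_add {s t : V} {y z : Sym2 V → ℝ}
    (hy : y ∈ convexHull ℝ (tourSet s t)) (hz : ∀ e, 0 ≤ z e)
    (hd : ∀ e : Sym2 V, e.IsDiag → z e = 0) :
    y + z ∈ convexHull ℝ (tourSet s t) := by
  have key : ∀ F : Finset (Sym2 V), y + ∑ e ∈ F, Pi.single e (z e) ∈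
      convexHull ℝ (tourSet s t) := by
    intro F
    induction F using Finset.induction_on with
    | empty => simpa using hy
    | insert e F he ih =>
      rw [Finset.sum_insert he, add_left_comm, add_comm]
      by_cases hde : e.IsDiag
      · rw [hd e hde]; simpa using ih
      · exact convexHull_tourSet_add_single ih hde (hz e)
  have := key univ
  rwa [Finset.univ_sum_single] at this

open scoped Pointwise in
/-- By Hahn–Banach separation, a vector that no nonnegative cost function separates from the
finitely many tours of the form `S + J` lies in their convex hull plus the nonnegative orthant;
the orthant part is then absorbed into tours. -/
lemma mem_hull_of_cheap {s t : V} {y : Sym2 V → ℝ} (hyd : ∀ e : Sym2 V, e.IsDiag → y e = 0)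
    (h : ∀ c : Sym2 V → ℝ, (∀ e, 0 ≤ c e) → ∃ S J : Finset (Sym2 V),
      IsSTTour s t (unionMult S J) ∧ ∑ e, c e * (unionMult S J e : ℝ) ≤ ∑ e, c e * y e) :
    y ∈ convexHull ℝ (tourSet s t) := by
  let vec : Finset (Sym2 V) × Finset (Sym2 V) → Sym2 V → ℝ := fun p e => (unionMult p.1 p.2 e : ℝ)
  let B : Set (Sym2 V → ℝ) := vec '' {p | IsSTTour s t (unionMult p.1 p.2)}
  have hBsub : B ⊆ tourSet s t := by
    rintro _ ⟨p, hp, rfl⟩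
    exact ⟨_, hp, rfl⟩
  have hBfin : B.Finite := (Set.toFinite _).image _
  let O : Set (Sym2 V → ℝ) := {z | ∀ e, 0 ≤ z e}
  have hOclosed : IsClosed O := by
    have : O = ⋂ e, {z : Sym2 V → ℝ | 0 ≤ z e} := by ext; simp [O]
    rw [this]
    exact isClosed_iInter fun e => isClosed_le continuous_const (continuous_apply e)
  have hOconv : Convex ℝ O := by
    intro z hz z' hz' p q hp hq _ e
    have := hz e
    have := hz' e
    simp only [Pi.add_apply, Pi.smul_apply, smul_eq_mul]
    positivity
  have hPclosed : IsClosed (convexHull ℝ B + O) :=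
    hOclosed.add_left_of_isCompact (hBfin.isCompact_convexHull ℝ)
  have hPconv : Convex ℝ (convexHull ℝ B + O) := (convex_convexHull ℝ B).add hOconv
  have hmem : y ∈ convexHull ℝ B + O := by
    by_contra hno
    obtain ⟨f, u, hfu, hfP⟩ := geometric_hahn_banach_point_closed hPconv hPclosed hno
    have hf : ∀ z : Sym2 V → ℝ, f z = ∑ e, f (Pi.single e 1) * z e := by
      intro z
      conv_lhs => rw [← Finset.univ_sum_single z]
      rw [map_sum]
      refine Finset.sum_congr rfl fun e _ => ?_
      have : (Pi.single e (z e) : Sym2 V → ℝ) = z e • Pi.single e 1 := by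
        rw [← Pi.single_smul]; simp
      rw [this, map_smul, smul_eq_mul, mul_comm]
    obtain ⟨S₀, J₀, hT₀, -⟩ := h 0 (by simp)
    have hv₀ : vec (S₀, J₀) ∈ convexHull ℝ B := subset_convexHull ℝ B ⟨_, hT₀, rfl⟩
    have hcnn : ∀ e, 0 ≤ f (Pi.single e 1) := by
      intro e
      by_contra hneg
      push Not at hneg
      have hu₀ : u < f (vec (S₀, J₀)) := by
        have := hfP _ (Set.add_mem_add hv₀ (show (0 : Sym2 V → ℝ) ∈ O by intro; simp))
        simpa using this
      -- moving by `r` in direction `e` brings `f` down to `u`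
      set r := (f (vec (S₀, J₀)) - u) / (- f (Pi.single e 1)) with hr
      have hr0 : 0 ≤ r := div_nonneg (by linarith) (by linarith)
      have := hfP _ (Set.add_mem_add hv₀ (show (r • Pi.single e 1 : Sym2 V → ℝ) ∈ O by
        intro g
        by_cases hg : g = e
        · subst hg; simpa using hr0
        · simp [Pi.single_eq_of_ne hg]))
      rw [map_add, map_smul, smul_eq_mul] at this
      have h2 : r * f (Pi.single e 1) = -(f (vec (S₀, J₀)) - u) := by
        rw [hr]
        have : f (Pi.single e 1) ≠ 0 := hneg.ne
        field_simp
      linarith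
    obtain ⟨S, J, hT, hle⟩ := h (fun e => f (Pi.single e 1)) hcnn
    have h1 := hfP _ (Set.add_mem_add (subset_convexHull ℝ B ⟨(S, J), hT, rfl⟩)
      (show (0 : Sym2 V → ℝ) ∈ O by intro; simp))
    rw [add_zero, hf] at h1
    rw [hf] at hfu
    simp only [vec] at h1
    linarith
  obtain ⟨p, hp, z, hz, rfl⟩ := Set.mem_add.1 hmem
  have hp' := convexHull_mono hBsub hp
  refine convexHull_tourSet_add hp' hz fun e he => ?_
  have hpe : convexHull ℝ (tourSet s t) ⊆ {w | w e = 0} := by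
    apply convexHull_min
    · rintro _ ⟨m, hm, rfl⟩
      simp [hm.1 e he]
    · intro w hw w' hw' p q _ _ _
      simp only [Set.mem_ofPred_eq] at hw hw'
      simp [hw, hw']
  have h1 : p e = 0 := hpe hp'
  have h2 := hyd e he
  simpa [h1] using h2

end final

/-- If no edge is contained in more than two narrow cuts, then `(3/2)·x` is a convex
combination of `{s,t}`-tours. -/
theorem three_halves_convex_combination_of_tours {V : Type*} [Fintype V]
    (s t : V) (hst : s ≠ t) (x : Sym2 V → ℝ) (hx : SubtourLP s t x)
    (htwo : ∀ e : Sym2 V, ¬ e.IsDiag →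
      (Finset.univ.filter fun Q : Finset (Sym2 V) =>
        IsNarrowCut s t x Q ∧ e ∈ Q).card ≤ 2) :
    ∃ (N : ℕ) (m : Fin N → Sym2 V → ℕ) (lam : Fin N → ℝ),
      (∀ k, IsSTTour s t (m k)) ∧
      (∀ k, 0 < lam k) ∧ (∑ k : Fin N, lam k = 1) ∧
      (∀ e : Sym2 V, ¬ e.IsDiag →
        ∑ k : Fin N, lam k * (m k e : ℝ) = (3 / 2) * x e) := by
  have hmem : (fun e => 3 / 2 * nonLoopPart x e) ∈ convexHull ℝ (tourSet s t) :=
    mem_hull_of_cheap (fun e he => by simp [nonLoopPart, he])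
      (fun c hc => exists_cheap_tour hst hx htwo hc)
  obtain ⟨ι, _, z, w, hz, -, hw, hw1, hsum⟩ := eq_pos_convex_span_of_mem_convexHull hmem
  have hz' : ∀ i, ∃ m : Sym2 V → ℕ, IsSTTour s t m ∧ z i = fun e => (m e : ℝ) :=
    fun i => hz ⟨i, rfl⟩
  choose m hm hzm using hz'
  let φ := (Fintype.equivFin ι).symm
  refine ⟨Fintype.card ι, fun k => m (φ k), fun k => w (φ k), fun k => hm _, fun k => hw _, ?_, ?_⟩
  · rw [← hw1]
    exact φ.sum_comp w
  · intro e he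
    have h1 := congrFun hsum e
    rw [φ.sum_comp fun i => w i * (m i e : ℝ)]
    simp only [Finset.sum_apply, Pi.smul_apply, smul_eq_mul, hzm, nonLoopPart, he, if_false] at h1
    exact h1
end
end

section
/- Let G = (V, E) be a finite graph and s ≠ t two vertices of V such that |δ(U)| ≥ 2 for every U with ∅ ⊊ U ⊊ V and |U ∩ {s, t}| = 1, and |δ(U)| ≥ 3 for every U with ∅ ⊊ U ⊊ V and |U ∩ {s, t}| ≠ 1. If U_1 ≠ U_2 are subsets of V with s ∈ U_1 ∩ U_2, t ∉ U_1 ∪ U_2, and |δ(U_1)| = |δ(U_2)| = 2, then δ(U_1) ∩ δ(U_2) = ∅; that is, distinct two-edge s–t cuts of G are edge-disjoint. -/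
/-!
The set `D = U₁ ∆ U₂` is nonempty and contains neither `s` nor `t`, so `|δ(D)| ≥ 3`. An edge
crosses `D` only if it crosses exactly one of `U₁`, `U₂` (`graphCut_symmDiff_subset`), so
`|δ(D)| ≤ 2 + 2 - 2 |δ(U₁) ∩ δ(U₂)|`. Hence `δ(U₁) ∩ δ(U₂)` is empty.
-/

open Finset

noncomputable section
open scoped Classical

/-- The edges of the graph `G` with exactly one endpoint in `U`. -/
def graphCut {V : Type*} [Fintype V] (G : SimpleGraph V) (U : Finset V) : Finset (Sym2 V) :=
  Finset.univ.filter fun e =>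
    e ∈ G.edgeSet ∧ ∃ u v : V, e = s(u, v) ∧ u ∈ U ∧ v ∉ U

lemma mk_mem_graphCut {V : Type*} [Fintype V] (G : SimpleGraph V) (U : Finset V) (a b : V) :
    s(a, b) ∈ graphCut G U ↔ G.Adj a b ∧ ¬(a ∈ U ↔ b ∈ U) := by
  simp only [graphCut, Finset.mem_filter, Finset.mem_univ, true_and, SimpleGraph.mem_edgeSet]
  refine and_congr_right fun _ => ⟨?_, fun h => ?_⟩
  · rintro ⟨u, v, he, hu, hv⟩
    rcases Sym2.eq_iff.1 he with ⟨rfl, rfl⟩ | ⟨rfl, rfl⟩ <;> tauto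
  · by_cases ha : a ∈ U
    · exact ⟨a, b, rfl, ha, by tauto⟩
    · exact ⟨b, a, Sym2.eq_swap, by tauto, ha⟩

/-- Only this inclusion of `δ(U₁ ∆ U₂) = δ(U₁) ∆ δ(U₂)` is needed, since `|δ(U₁ ∆ U₂)|` is
to be bounded from above. -/
lemma graphCut_symmDiff_subset {V : Type*} [Fintype V] (G : SimpleGraph V) (U₁ U₂ : Finset V) :
    graphCut G (symmDiff U₁ U₂) ⊆
      (graphCut G U₁ ∪ graphCut G U₂) \ (graphCut G U₁ ∩ graphCut G U₂) := by
  intro e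
  induction e using Sym2.ind with
  | _ a b =>
    simp only [Finset.mem_sdiff, Finset.mem_union, Finset.mem_inter, mk_mem_graphCut,
      Finset.mem_symmDiff]
    tauto

/-- In a graph whose `s`–`t` cuts have at least two edges and whose other cuts have at
least three edges, distinct two-edge `s`–`t` cuts are edge-disjoint. -/
theorem two_edge_cuts_disjoint {V : Type*} [Fintype V]
    (G : SimpleGraph V) (s t : V) (hst : s ≠ t)
    (hcut2 : ∀ U : Finset V, U.Nonempty → U ≠ Finset.univ →
      (U ∩ {s, t}).card = 1 → 2 ≤ (graphCut G U).card)
    (hcut3 : ∀ U : Finset V, U.Nonempty → U ≠ Finset.univ →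
      (U ∩ {s, t}).card ≠ 1 → 3 ≤ (graphCut G U).card)
    (U₁ U₂ : Finset V) (hU : U₁ ≠ U₂)
    (hs1 : s ∈ U₁) (hs2 : s ∈ U₂) (ht1 : t ∉ U₁) (ht2 : t ∉ U₂)
    (h1 : (graphCut G U₁).card = 2) (h2 : (graphCut G U₂).card = 2) :
    graphCut G U₁ ∩ graphCut G U₂ = ∅ := by
  have hsD : s ∉ symmDiff U₁ U₂ := by simp [Finset.mem_symmDiff, hs1, hs2]
  have htD : t ∉ symmDiff U₁ U₂ := by simp [Finset.mem_symmDiff, ht1, ht2]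
  have hne : (symmDiff U₁ U₂).Nonempty := by
    rw [Finset.nonempty_iff_ne_empty]
    exact fun h => hU (symmDiff_eq_bot.1 h)
  have hD : symmDiff U₁ U₂ ∩ {s, t} = ∅ := by
    ext x
    simp only [Finset.mem_inter, Finset.mem_insert, Finset.mem_singleton, Finset.notMem_empty,
      iff_false]
    rintro ⟨hx, rfl | rfl⟩
    exacts [hsD hx, htD hx]
  have h3 := hcut3 (symmDiff U₁ U₂) hne (fun h => hsD (h ▸ Finset.mem_univ s)) (by simp [hD])
  have hle := Finset.card_le_card (graphCut_symmDiff_subset G U₁ U₂)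
  rw [Finset.card_sdiff_of_subset
    (Finset.inter_subset_left.trans Finset.subset_union_left)] at hle
  have hsum := Finset.card_union_add_card_inter (graphCut G U₁) (graphCut G U₂)
  rw [← Finset.card_eq_zero]
  -- With `i = |δ(U₁) ∩ δ(U₂)|`, the bounds above say `3 ≤ (4 - i) - i`.
  omega
end
end

section
/- Let x be a feasible solution of the subtour elimination LP for s–t path TSP, let ζ be a real number, and let U, W ⊆ V with s ∈ U ⊊ W ⊆ V∖{t}, x(δ(U)) ≤ 2 − ζ and x(δ(W)) ≤ 2 − ζ. Let 𝒫 be a partition of W∖U into nonempty classes. Then the sum of x(e) over all edges e whose two endpoints both lie in W∖U but in different classes of 𝒫 is at least |𝒫| − 2 + ζ. -/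
/-!
Write `A` for the set of edges inside `W \ U` joining different classes. Every class `p`
is nonempty and avoids `s` and `t`, so `x(δ(p)) ≥ 2`, and hence `∑ₚ x(δ(p)) ≥ 2|𝒫|`.
On the other hand each edge satisfies
`#{p | e ∈ δ(p)} ≤ 2·[e ∈ A] + [e ∈ δ(U)] + [e ∈ δ(W)]` (`card_parts_cut_le`), so
`∑ₚ x(δ(p)) ≤ 2 x(A) + x(δ(U)) + x(δ(W)) ≤ 2 x(A) + 4 - 2ζ`.
Comparing the two bounds and halving gives `x(A) ≥ |𝒫| - 2 + ζ`.
-/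

open Finset

noncomputable section
open scoped Classical

lemma mem_cutEdges_mk {V : Type*} [Fintype V] (U : Finset V) (a b : V) :
    s(a, b) ∈ cutEdges U ↔ (a ∈ U ∧ b ∉ U) ∨ (b ∈ U ∧ a ∉ U) := by
  simp only [cutEdges, Finset.mem_filter, Finset.mem_univ, true_and]
  constructor
  · rintro ⟨u, v, he, hu, hv⟩
    rcases Sym2.eq_iff.1 he with ⟨rfl, rfl⟩ | ⟨rfl, rfl⟩
    · exact Or.inl ⟨hu, hv⟩
    · exact Or.inr ⟨hu, hv⟩
  · rintro (⟨h1, h2⟩ | ⟨h1, h2⟩)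
    · exact ⟨a, b, rfl, h1, h2⟩
    · exact ⟨b, a, Sym2.eq_swap, h1, h2⟩

/-- The edges inside `S` that join different classes of the partition `P` of `S`. -/
def crossEdges {V : Type*} [Fintype V] {S : Finset V} (P : Finpartition S) :
    Finset (Sym2 V) :=
  Finset.univ.filter fun e : Sym2 V => ∃ u v : V, e = s(u, v) ∧
    u ∈ S ∧ v ∈ S ∧ ∀ p ∈ P.parts, ¬ (u ∈ p ∧ v ∈ p)

lemma card_parts_containing_le_one {V : Type*} {S : Finset V} (P : Finpartition S) (a : V) :
    (P.parts.filter fun p => a ∈ p).card ≤ 1 := by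
  rw [Finset.card_le_one]
  intro p hp q hq
  rw [Finset.mem_filter] at hp hq
  exact P.eq_of_mem_parts hp.1 hq.1 hp.2 hq.2

/-- An edge leaves at most two classes. If it leaves two, it joins different classes; if it
leaves exactly one, its other endpoint lies in `U` or outside `W`, so it crosses `U` or `W`. -/
lemma card_parts_cut_le {V : Type*} [Fintype V] (U W : Finset V) (hUW : U ⊆ W)
    (P : Finpartition (W \ U)) (e : Sym2 V) :
    (P.parts.filter fun p => e ∈ cutEdges p).card ≤
      2 * (if e ∈ crossEdges P then 1 else 0) + (if e ∈ cutEdges U then 1 else 0)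
        + (if e ∈ cutEdges W then 1 else 0) := by
  induction e using Sym2.ind with
  | _ a b =>
  have hsub : ∀ p ∈ P.parts, p ⊆ W \ U := fun p hp => P.le hp
  -- The bound for an edge with one endpoint `c` in `W \ U` and the other endpoint outside.
  have hout : ∀ c d : V, c ∈ W \ U → d ∉ W \ U →
      (P.parts.filter fun p => s(c, d) ∈ cutEdges p).card ≤
        (if s(c, d) ∈ cutEdges U then 1 else 0) + (if s(c, d) ∈ cutEdges W then 1 else 0) := by
    intro c d hc hd
    have h1 : (P.parts.filter fun p => s(c, d) ∈ cutEdges p).card ≤ 1 := by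
      refine le_trans (Finset.card_le_card ?_) (card_parts_containing_le_one P c)
      intro p hp
      simp only [Finset.mem_filter, mem_cutEdges_mk] at hp ⊢
      have := @hsub p hp.1 d
      tauto
    have h2 : s(c, d) ∈ cutEdges U ∨ s(c, d) ∈ cutEdges W := by
      simp only [mem_cutEdges_mk, Finset.mem_sdiff] at *
      have := @hUW d
      tauto
    rcases h2 with h2 | h2 <;> simp only [h2, if_true] <;> omega
  by_cases ha : a ∈ W \ U <;> by_cases hb : b ∈ W \ U
  · by_cases hc : s(a, b) ∈ crossEdges P
    · have : (P.parts.filter fun p => s(a, b) ∈ cutEdges p).card ≤ 1 + 1 := by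
        refine le_trans (Finset.card_le_card ?_) (le_trans (Finset.card_union_le _ _)
          (add_le_add (card_parts_containing_le_one P a) (card_parts_containing_le_one P b)))
        intro p hp
        simp only [Finset.mem_filter, mem_cutEdges_mk, Finset.mem_union] at hp ⊢
        tauto
      simp only [hc, if_true]
      omega
    · have hq : ∃ q ∈ P.parts, a ∈ q ∧ b ∈ q := by
        by_contra! h
        exact hc (by
          simp only [crossEdges, Finset.mem_filter, Finset.mem_univ, true_and]
          exact ⟨a, b, rfl, ha, hb, fun p hp hab => h p hp hab.1 hab.2⟩)
      obtain ⟨q, hq, haq, hbq⟩ := hq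
      have : (P.parts.filter fun p => s(a, b) ∈ cutEdges p) = ∅ := by
        rw [Finset.filter_eq_empty_iff]
        intro p hp h
        rw [mem_cutEdges_mk] at h
        rcases h with ⟨h1, h2⟩ | ⟨h1, h2⟩
        · exact h2 (P.eq_of_mem_parts hp hq h1 haq ▸ hbq)
        · exact h2 (P.eq_of_mem_parts hp hq h1 hbq ▸ haq)
      rw [this]
      simp
  · have := hout a b ha hb
    omega
  · have := hout b a hb ha
    rw [Sym2.eq_swap] at this
    omega
  · have : (P.parts.filter fun p => s(a, b) ∈ cutEdges p) = ∅ := by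
      rw [Finset.filter_eq_empty_iff]
      intro p hp h
      rw [mem_cutEdges_mk] at h
      rcases h with h | h
      · exact ha (hsub p hp h.1)
      · exact hb (hsub p hp h.1)
    rw [this]
    simp

/-- Level sets of narrow cuts are `ζ`-connected: for nested `s`–`t` cuts of value at
most `2 − ζ` and any partition `𝒫` of `W∖U`, the total `x`-value of the edges inside
`W∖U` joining different classes of `𝒫` is at least `|𝒫| − 2 + ζ`. -/
theorem levelset_partition_bound {V : Type*} [Fintype V] (s t : V) (hst : s ≠ t)
    (x : Sym2 V → ℝ) (hx : SubtourLP s t x) (ζ : ℝ)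
    (U W : Finset V) (hsU : s ∈ U) (hUW : U ⊂ W) (htW : t ∉ W)
    (hU : ∑ e ∈ cutEdges U, x e ≤ 2 - ζ) (hW : ∑ e ∈ cutEdges W, x e ≤ 2 - ζ)
    (P : Finpartition (W \ U)) :
    (P.parts.card : ℝ) - 2 + ζ ≤
      ∑ e ∈ (Finset.univ.filter fun e : Sym2 V => ∃ u v : V, e = s(u, v) ∧
        u ∈ W \ U ∧ v ∈ W \ U ∧ ∀ p ∈ P.parts, ¬ (u ∈ p ∧ v ∈ p)), x e := by
  obtain ⟨hx0, -, hcut⟩ := hx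
  change _ ≤ ∑ e ∈ crossEdges P, x e
  have hpart : ∀ p ∈ P.parts, (2 : ℝ) ≤ ∑ e ∈ cutEdges p, x e := by
    intro p hp
    have hps : s ∉ p := fun h => (Finset.mem_sdiff.1 (P.le hp h)).2 hsU
    have hpt : t ∉ p := fun h => htW (Finset.mem_sdiff.1 (P.le hp h)).1
    have h := hcut p (P.nonempty_of_mem_parts hp)
      (fun h => hps (h ▸ Finset.mem_univ s))
    have h0 : p ∩ {s, t} = ∅ := by
      ext v
      simp only [Finset.mem_inter, Finset.mem_insert, Finset.mem_singleton,
        Finset.notMem_empty, iff_false, not_and, not_or]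
      exact fun hv => ⟨fun h => hps (h ▸ hv), fun h => hpt (h ▸ hv)⟩
    simpa [lpBound, h0] using h
  have hlow : (P.parts.card : ℝ) * 2 ≤ ∑ p ∈ P.parts, ∑ e ∈ cutEdges p, x e := by
    simpa using Finset.card_nsmul_le_sum P.parts _ 2 hpart
  have hind : ∀ A : Finset (Sym2 V), ∑ e ∈ A, x e = ∑ e, (if e ∈ A then 1 else 0) * x e := by
    intro A
    simp
  have hup : ∑ p ∈ P.parts, ∑ e ∈ cutEdges p, x e ≤
      2 * (∑ e ∈ crossEdges P, x e) + ∑ e ∈ cutEdges U, x e + ∑ e ∈ cutEdges W, x e := by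
    simp_rw [hind]
    rw [Finset.sum_comm, Finset.mul_sum, ← Finset.sum_add_distrib, ← Finset.sum_add_distrib]
    refine Finset.sum_le_sum fun e _ => ?_
    have h : ((P.parts.filter fun p => e ∈ cutEdges p).card : ℝ) ≤
        2 * (if e ∈ crossEdges P then 1 else 0) + (if e ∈ cutEdges U then 1 else 0)
          + (if e ∈ cutEdges W then 1 else 0) := by
      exact_mod_cast card_parts_cut_le U W hUW.1 P e
    rw [← Finset.sum_mul, Finset.sum_boole]
    calc _ ≤ _ := mul_le_mul_of_nonneg_right h (hx0 e)
      _ = _ := by ring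
  linarith
end
end

section
/- Let G be a connected finite graph on vertex set V, let s ≠ t be two vertices, let S be a spanning tree of G, and let P = S(s,t) be the unique path from s to t in S. Define the multiplicity function m by m(e) = 1 for e ∈ P, m(e) = 2 for e ∈ S∖P, and m(e) = 0 for all other edges. Then m is an {s,t}-tour, and for every cost function c on edges its cost ∑_e c(e)·m(e) equals 2·∑_{e ∈ S} c(e) − ∑_{e ∈ P} c(e). -/
/-! The multiplicities satisfy `m e + [e ∈ P] = 2 * [e ∈ S]`, because `P ⊆ S`. Summing this identity
against `c` gives the cost formula. Summing it over the edges at a vertex `v` shows that the degree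
of `v` has the same parity as the number of edges of the path `P` at `v`, which is odd exactly at
the two ends (`SimpleGraph.Walk.IsTrail.even_countP_edges_iff`). The support of `m` is `S`, so
connectedness is inherited from the tree. -/

open Finset

noncomputable section
open scoped Classical

/-- Taking a spanning tree `S`, its `s`–`t` path `P` once and the edges of `S∖P` twice
yields an `{s,t}`-tour, of cost `2·c(S) − c(P)` for every cost function `c`. -/
theorem tree_plus_offpath_is_tour {V : Type*} [Fintype V]
    (G : SimpleGraph V) (hG : G.Connected) (s t : V) (hst : s ≠ t)
    (S : Finset (Sym2 V)) (hSsub : (S : Set (Sym2 V)) ⊆ G.edgeSet)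
    (hStree : (SimpleGraph.fromEdgeSet (S : Set (Sym2 V))).IsTree)
    (P : Finset (Sym2 V))
    (hP : ∃ p : (SimpleGraph.fromEdgeSet (S : Set (Sym2 V))).Walk s t,
      p.IsPath ∧ P = p.edges.toFinset)
    (m : Sym2 V → ℕ)
    (hm : m = fun e => if e ∈ P then 1 else if e ∈ S then 2 else 0) :
    IsSTTour s t m ∧
      ∀ c : Sym2 V → ℝ,
        ∑ e : Sym2 V, c e * (m e : ℝ) = 2 * (∑ e ∈ S, c e) - ∑ e ∈ P, c e := by
  obtain ⟨p, hp, rfl⟩ := hP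
  have hPS : ∀ e ∈ p.edges.toFinset, e ∈ S := by
    intro e he
    have h := p.edges_subset_edgeSet (List.mem_toFinset.1 he)
    rw [SimpleGraph.edgeSet_fromEdgeSet] at h
    exact_mod_cast h.1
  have hsupp : ∀ e, m e ≠ 0 ↔ e ∈ S := by
    intro e
    have := hPS e
    simp only [hm]
    split_ifs <;> simp_all
  have hkey : ∀ e, m e + (if e ∈ p.edges.toFinset then 1 else 0) = 2 * if e ∈ S then 1 else 0 := by
    intro e
    have := hPS e
    simp only [hm]
    split_ifs <;> simp_all
  refine ⟨⟨?_, ?_, ?_⟩, ?_⟩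
  · intro e he
    by_contra h
    exact G.not_isDiag_of_mem_edgeSet (hSsub (Finset.mem_coe.2 ((hsupp e).1 h))) he
  · have hset : {e : Sym2 V | m e ≠ 0} = (S : Set (Sym2 V)) := by
      ext e
      exact hsupp e
    rw [hset]
    exact hStree.connected
  · intro v
    have hsum := Finset.sum_congr (rfl : Finset.univ.filter (fun e : Sym2 V => v ∈ e) = _)
      (fun e _ => hkey e)
    rw [Finset.sum_add_distrib, ← Finset.mul_sum] at hsum
    -- A trail repeats no edge, so counting its edges at `v` in the list or in the set agrees.
    have hcount : ∑ e ∈ Finset.univ.filter (fun e : Sym2 V => v ∈ e),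
        (if e ∈ p.edges.toFinset then 1 else 0) = p.edges.countP (fun e => v ∈ e) := by
      rw [← Finset.card_filter, List.countP_eq_length_filter,
        ← List.toFinset_card_of_nodup (hp.isTrail.edges_nodup.filter _)]
      congr 1
      ext e
      simp [and_comm]
    rw [hcount] at hsum
    have hpar := hp.isTrail.even_countP_edges_iff v
    have hdeg : Odd (edgeDegree m v) ↔ ¬ Even (p.edges.countP (fun e => v ∈ e)) := by
      unfold edgeDegree
      rw [Nat.odd_iff, Nat.even_iff]
      omega
    rw [hdeg, hpar]
    tauto
  · intro c
    have hreal : ∀ e, c e * (m e : ℝ) =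
        2 * (if e ∈ S then c e else 0) - (if e ∈ p.edges.toFinset then c e else 0) := by
      intro e
      have := hPS e
      simp only [hm]
      split_ifs <;> simp_all <;> ring
    rw [Finset.sum_congr rfl (fun e _ => hreal e), Finset.sum_sub_distrib, ← Finset.mul_sum]
    simp only [Finset.sum_ite_mem, Finset.univ_inter]
end
end

section
/- Let G be a connected finite graph on vertex set V, let 𝒮 be a finite collection of spanning trees of G with positive reals λ_S (S ∈ 𝒮) satisfying ∑_{S ∈ 𝒮} λ_S = 1, and let x be the vector on edges defined by x(e) := ∑_{S ∈ 𝒮 : e ∈ S} λ_S. Then for every cut Q = δ(U) with ∅ ⊊ U ⊊ V, ∑_{S ∈ 𝒮 : |S ∩ Q| = 1} λ_S ≥ 2 − x(Q). -/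
/-!
Each tree `S` meets the cut `Q = δ(U)` in at least one edge
(`one_le_card_inter_cutEdges`), so `2 - |S ∩ Q|` is at most the indicator of `|S ∩ Q| = 1`.
Averaging this pointwise bound with the weights `λ_S` gives the claim, because `∑ λ_S = 1` and,
exchanging the order of summation, `x(Q) = ∑ λ_S |S ∩ Q|` (`sum_cutEdges_marginal`).
-/

open Finset

noncomputable section
open scoped Classical

/-- A connected edge set crosses every proper cut: a walk from `U` to its complement has a step
leaving `U`. -/
lemma one_le_card_inter_cutEdges {V : Type*} [Fintype V] (S : Finset (Sym2 V))
    (hS : (SimpleGraph.fromEdgeSet (S : Set (Sym2 V))).Connected)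
    (U : Finset V) (hU1 : U.Nonempty) (hU2 : U ≠ Finset.univ) :
    1 ≤ (S ∩ cutEdges U).card := by
  obtain ⟨u, hu⟩ := hU1
  obtain ⟨v, hv⟩ : ∃ v, v ∉ U := by
    by_contra! h
    exact hU2 (Finset.eq_univ_iff_forall.2 h)
  obtain ⟨p⟩ := hS.preconnected u v
  obtain ⟨d, -, hd1, hd2⟩ := p.exists_boundary_dart (U : Set V) (by simpa) (by simpa)
  have hadj := d.adj
  rw [SimpleGraph.fromEdgeSet_adj] at hadj
  refine Finset.card_pos.2 ⟨s(d.fst, d.snd), Finset.mem_inter.2 ⟨by simpa using hadj.1, ?_⟩⟩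
  exact Finset.mem_filter.2 ⟨Finset.mem_univ _, d.fst, d.snd, rfl, by simpa using hd1,
    by simpa using hd2⟩

lemma sum_cutEdges_marginal {V : Type*} [Fintype V]
    (𝒮 : Finset (Finset (Sym2 V))) (lam : Finset (Sym2 V) → ℝ) (Q : Finset (Sym2 V)) :
    ∑ e ∈ Q, ∑ S ∈ 𝒮.filter (fun S => e ∈ S), lam S
      = ∑ S ∈ 𝒮, lam S * ((S ∩ Q).card : ℝ) := by
  simp_rw [Finset.sum_filter]
  rw [Finset.sum_comm]
  refine Finset.sum_congr rfl fun S _ => ?_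
  rw [← Finset.sum_filter, Finset.sum_const, nsmul_eq_mul, mul_comm,
    Finset.filter_mem_eq_inter, Finset.inter_comm]

/-- For a convex combination of spanning trees with edge marginals `x`, the total
coefficient of the trees having exactly one edge in a cut `Q = δ(U)` is at least
`2 − x(Q)`. -/
theorem lonely_probability_bound {V : Type*} [Fintype V]
    (G : SimpleGraph V) (hG : G.Connected)
    (𝒮 : Finset (Finset (Sym2 V))) (lam : Finset (Sym2 V) → ℝ)
    (htrees : ∀ S ∈ 𝒮, (S : Set (Sym2 V)) ⊆ G.edgeSet ∧
      (SimpleGraph.fromEdgeSet (S : Set (Sym2 V))).IsTree)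
    (hpos : ∀ S ∈ 𝒮, 0 < lam S) (hsum : ∑ S ∈ 𝒮, lam S = 1)
    (x : Sym2 V → ℝ) (hxdef : ∀ e : Sym2 V, x e = ∑ S ∈ 𝒮.filter (fun S => e ∈ S), lam S)
    (U : Finset V) (hU1 : U.Nonempty) (hU2 : U ≠ Finset.univ) :
    2 - ∑ e ∈ cutEdges U, x e ≤
      ∑ S ∈ 𝒮.filter (fun S => (S ∩ cutEdges U).card = 1), lam S := by
  rw [Finset.sum_congr rfl fun e _ => hxdef e, sum_cutEdges_marginal, Finset.sum_filter]
  have h2 : (2 : ℝ) = ∑ S ∈ 𝒮, lam S * 2 := by rw [← Finset.sum_mul, hsum, one_mul]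
  rw [h2, ← Finset.sum_sub_distrib]
  refine Finset.sum_le_sum fun S hS => ?_
  have h1 := one_le_card_inter_cutEdges S (htrees S hS).2.connected U hU1 hU2
  have hl := hpos S hS
  split_ifs with hc
  · rw [hc]
    norm_num
    linarith
  · have hge : (2 : ℝ) ≤ ((S ∩ cutEdges U).card : ℝ) := by
      exact_mod_cast (show 2 ≤ (S ∩ cutEdges U).card by omega)
    nlinarith
end
end
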